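/- Let ψ : ℝ^d → ℝ be ψ(x) = ∏_{i=1}^d sin(πx_i)/(πx_i), and for n ≥ 1 let (u(n,·)∗ψ)(v) = ∫_{ℝ^d} u(n,y) ψ(v−y) dy. Then n^d · ∑_{v∈ℤ^d} ( x_n(v) − (u(n,·)∗ψ)(v) )² → 0 as n → ∞. (Local convergence of the Jacobi polynomial iteration to the sinc-filtered fundamental solution of the Euler–Poisson–Darboux equation.) -/

import Mathlib

open MeasureTheory Matrix Filter Topology Real

noncomputable section

def latticeConv {d : ℕ} (ω x : (Fin d → ℤ) → ℝ) : (Fin d → ℤ) → ℝ :=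
  fun v => ∑' η : Fin d → ℤ, ω (v - η) * x η

def covQ (d : ℕ) (ω : (Fin d → ℤ) → ℝ) : Matrix (Fin d) (Fin d) ℝ :=
  Matrix.of fun i j => ∑' v : Fin d → ℤ, ω v * (v i : ℝ) * (v j : ℝ)

def ftOmega {d : ℕ} (ω : (Fin d → ℤ) → ℝ) (ξ : Fin d → ℝ) : ℂ :=
  ∑' v : Fin d → ℤ, (ω v : ℂ) * Complex.exp (Complex.I * ((∑ i, ξ i * (v i : ℝ) : ℝ) : ℂ))

def aCoef0 (d : ℕ) : ℝ := ((d : ℝ) + 4) / (2 * (2 + (d : ℝ)))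
def bCoef0 (d : ℕ) : ℝ := (d : ℝ) / (2 * (2 + (d : ℝ)))
def aCoef (d n : ℕ) : ℝ :=
  (2 * (n : ℝ) + (d : ℝ)/2 + 1) * (2 * (n : ℝ) + (d : ℝ)/2 + 2) / (2 * ((n : ℝ) + 1 + (d : ℝ)/2)^2)
def bCoef (d n : ℕ) : ℝ :=
  (d : ℝ)^2 * (2 * (n : ℝ) + (d : ℝ)/2 + 1) / (8 * ((n : ℝ) + 1 + (d : ℝ)/2)^2 * (2 * (n : ℝ) + (d : ℝ)/2))
def cCoef (d n : ℕ) : ℝ :=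
  (n : ℝ)^2 * (2 * (n : ℝ) + (d : ℝ)/2 + 2) / (((n : ℝ) + 1 + (d : ℝ)/2)^2 * (2 * (n : ℝ) + (d : ℝ)/2))

def besselJ (ν z : ℝ) : ℝ :=
  ∑' m : ℕ, ((-1 : ℝ)^m / ((m.factorial : ℝ) * Real.Gamma ((m : ℝ) + ν + 1))) * (z / 2) ^ (2 * (m : ℝ) + ν)

def jacobiP (α β : ℝ) (n : ℕ) (x : ℝ) : ℝ :=
  ∑ s ∈ Finset.range (n + 1),
    (Real.Gamma ((n : ℝ) + α + 1) / (Real.Gamma (α + (s : ℝ) + 1) * ((n - s).factorial : ℝ))) *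
    (Real.Gamma ((n : ℝ) + β + 1) / (Real.Gamma ((n : ℝ) + β - (s : ℝ) + 1) * (s.factorial : ℝ))) *
    ((x - 1) / 2) ^ s * ((x + 1) / 2) ^ (n - s)

def jacobiPi (α β : ℝ) (n : ℕ) (x : ℝ) : ℝ := jacobiP α β n x / jacobiP α β n 1

def pd {d : ℕ} (j : Fin d) (g : (Fin d → ℝ) → ℝ) : (Fin d → ℝ) → ℝ :=
  fun y => deriv (fun s => g (Function.update y j s)) (y j)

/-!
On the dual torus, convolution by `ω` is multiplication by its symbol `ω̂`, so the three-term
recurrence makes `x n v` the `v`-th cosine coefficient of `P_n(ω̂)`, where `P_n` is the Jacobi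
polynomial with parameters `(d / 2, 0)` normalised at `1`. The Fourier transform of `u(n, ·)` is
`ξ ↦ ₀F₁(; d / 2 + 1; -⟨nξ, Q nξ⟩ / 4)`, and the sinc filter cuts it off to the cube `[-π, π]^d`, so
the filtered solution at `v` is the `v`-th cosine coefficient of this transform. By Bessel's
inequality it suffices that `n ^ d` times the squared `L²` distance of the two functions on the
torus tends to `0`. After the substitution `ξ = η / n` this is dominated convergence. The integrand
tends to `0` pointwise by the Mehler–Heine asymptotics, as `n² (1 - ω̂(η / n)) / 2 → ⟨η, Q η⟩ / 4`.
It is bounded by a multiple of `(1 + ‖η‖) ^ (-(d + 1))`: the Sonin–Pólya monotonicity argument for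
the Jacobi equation in Liouville normal form bounds `P_n` away from the endpoint `-1`, where `ω̂`
stays by aperiodicity, and `1 - ω̂(ξ)` is at least a multiple of `‖ξ‖²` on the cube.
-/

section JacobiPolynomial

variable {α : ℝ}

/-- The Jacobi polynomial `P_n^{(α,β)}`, normalised to take the value `1` at `x = 1` and written
in the variable `y = (1 - x) / 2`; it is the terminating series `₂F₁(-n, n + α + β + 1; α + 1; y)`.
-/
def shiftedJacobi (α β : ℝ) (n : ℕ) : Polynomial ℝ :=
  ∑ k ∈ Finset.range (n + 1),
    Polynomial.C (ordinaryHypergeometricCoefficient (-n : ℝ) (n + α + β + 1) (α + 1) k) *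
      Polynomial.X ^ k

lemma ascPochhammer_eval_add_one_mul (a : ℝ) (k : ℕ) :
    a * (ascPochhammer ℝ k).eval (a + 1) = (ascPochhammer ℝ k).eval a * (a + k) := by
  rw [← ascPochhammer_succ_eval, ascPochhammer_succ_left]
  simp

lemma coeff_shiftedJacobi (α β : ℝ) (n k : ℕ) :
    (shiftedJacobi α β n).coeff k =
      ordinaryHypergeometricCoefficient (-n : ℝ) (n + α + β + 1) (α + 1) k := by
  simp only [shiftedJacobi, Polynomial.finsetSum_coeff, Polynomial.coeff_C_mul_X_pow,
    Finset.sum_ite_eq, Finset.mem_range]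
  split_ifs with h
  · rfl
  · rw [ordinaryHypergeometricCoefficient, ascPochhammer_eval_neg_coe_nat_of_lt (by lia)]
    simp

lemma coeff_zero_shiftedJacobi (α β : ℝ) (n : ℕ) : (shiftedJacobi α β n).coeff 0 = 1 := by
  simp [coeff_shiftedJacobi, ordinaryHypergeometricCoefficient]

lemma shiftedJacobi_eval_zero (α β : ℝ) (n : ℕ) : (shiftedJacobi α β n).eval 0 = 1 := by
  rw [← Polynomial.coeff_zero_eq_eval_zero, coeff_zero_shiftedJacobi]

lemma shiftedJacobi_zero (α β : ℝ) : shiftedJacobi α β 0 = 1 := by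
  simp [shiftedJacobi]

lemma coeff_succ_shiftedJacobi (hα : -1 < α) (β : ℝ) (n k : ℕ) :
    (k + 1) * (α + 1 + k) * (shiftedJacobi α β n).coeff (k + 1) =
      (k - n) * (k + n + α + β + 1) * (shiftedJacobi α β n).coeff k := by
  have h₁ := (ascPochhammer_pos k (α + 1) (by linarith)).ne'
  have h₂ : α + 1 + k ≠ 0 := by linarith [k.cast_nonneg (α := ℝ)]
  simp only [coeff_shiftedJacobi, ordinaryHypergeometricCoefficient, ascPochhammer_succ_eval,
    Nat.factorial_succ]
  push_cast
  field_simp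
  ring

lemma natDegree_shiftedJacobi_lt (α β : ℝ) (n : ℕ) :
    (shiftedJacobi α β n).natDegree < n + 1 := by
  rw [Nat.lt_succ_iff]
  exact Polynomial.natDegree_sum_le_of_forall_le _ _ fun k hk ↦
    (Polynomial.natDegree_C_mul_X_pow_le _ _).trans (by simpa [Nat.lt_succ_iff] using hk)

lemma shiftedJacobi_one_eval (hα : -1 < α) (β y : ℝ) :
    (shiftedJacobi α β 1).eval y = 1 - (α + β + 2) / (α + 1) * y := by
  have : α + 1 ≠ 0 := by linarith
  have h := coeff_succ_shiftedJacobi hα β 1 0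
  rw [coeff_zero_shiftedJacobi] at h
  rw [Polynomial.eval_eq_sum_range' (natDegree_shiftedJacobi_lt α β 1), Finset.sum_range_succ,
    Finset.sum_range_one, coeff_zero_shiftedJacobi]
  push_cast at h
  field_simp
  linear_combination y * h

lemma coeff_succ_shiftedJacobi_succ (hα : -1 < α) (β : ℝ) (n k : ℕ) :
    (k + 1) * (α + 1 + k) * (n + α + β + 1) * (shiftedJacobi α β (n + 1)).coeff (k + 1) =
      -((n + 1) * (n + α + β + 1 + k) * (n + α + β + 2 + k) * (shiftedJacobi α β n).coeff k) := by
  have h₁ := (ascPochhammer_pos k (α + 1) (by linarith)).ne'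
  have h₂ : α + 1 + k ≠ 0 := by linarith [k.cast_nonneg (α := ℝ)]
  have h₃ := ascPochhammer_eval_add_one_mul (-(n + 1) : ℝ) k
  have h₄ := ascPochhammer_eval_add_one_mul (n + α + β + 1) k
  rw [show -(n + 1) + 1 = (-n : ℝ) by ring] at h₃
  simp only [coeff_shiftedJacobi, ordinaryHypergeometricCoefficient, ascPochhammer_succ_eval,
    Nat.factorial_succ, Nat.cast_succ]
  rw [show (n : ℝ) + 1 + α + β + 1 = n + α + β + 1 + 1 by ring]
  push_cast
  field_simp
  linear_combination
    -((n + α + β + 1) * (n + α + β + 2 + k)) * (ascPochhammer ℝ k).eval (n + α + β + 1 + 1) * h₃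
    - (n + 1) * (n + α + β + 2 + k) * (ascPochhammer ℝ k).eval (-n : ℝ) * h₄

lemma coeff_shiftedJacobi_pred (hα : -1 < α) (β : ℝ) (n k : ℕ) :
    (k + 1) * (α + 1 + k) * (n + 1) * (shiftedJacobi α β n).coeff (k + 1) =
      (n + α + β + 1) * (n + 1 - k) * (k - n) * (shiftedJacobi α β (n + 1)).coeff k := by
  have h₁ := (ascPochhammer_pos k (α + 1) (by linarith)).ne'
  have h₂ : α + 1 + k ≠ 0 := by linarith [k.cast_nonneg (α := ℝ)]
  have h₃ := ascPochhammer_eval_add_one_mul (-(n + 1) : ℝ) k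
  have h₄ := ascPochhammer_eval_add_one_mul (n + α + β + 1) k
  rw [show -(n + 1) + 1 = (-n : ℝ) by ring] at h₃
  simp only [coeff_shiftedJacobi, ordinaryHypergeometricCoefficient, ascPochhammer_succ_eval,
    Nat.factorial_succ, Nat.cast_succ]
  rw [show (n : ℝ) + 1 + α + β + 1 = n + α + β + 1 + 1 by ring]
  push_cast
  field_simp
  linear_combination
    (n - k) * (n + α + β + 1 + k) * (ascPochhammer ℝ k).eval (n + α + β + 1) * h₃
    + (n + 1 - k) * (n - k) * (ascPochhammer ℝ k).eval (-(n + 1) : ℝ) * h₄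

lemma shiftedJacobi_recurrence (hα : -1 < α) (β : ℝ) (n : ℕ) (y : ℝ) :
    2 * (n + 2 + α) * (n + 2 + α + β) * (2 * n + 2 + α + β) * (shiftedJacobi α β (n + 2)).eval y =
      (2 * n + 3 + α + β) *
          ((2 * n + 2 + α + β) * (2 * n + 4 + α + β) * (1 - 2 * y) + (α ^ 2 - β ^ 2)) *
          (shiftedJacobi α β (n + 1)).eval y
        - 2 * (n + 1) * (n + 1 + β) * (2 * n + 4 + α + β) * (shiftedJacobi α β n).eval y := by
  set A : ℝ := 2 * (n + 2 + α) * (n + 2 + α + β) * (2 * n + 2 + α + β)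
  set B : ℝ := (2 * n + 3 + α + β) * ((2 * n + 2 + α + β) * (2 * n + 4 + α + β))
  set C : ℝ := (2 * n + 3 + α + β) * (α ^ 2 - β ^ 2)
  set D : ℝ := 2 * (n + 1) * (n + 1 + β) * (2 * n + 4 + α + β)
  have key : Polynomial.C A * shiftedJacobi α β (n + 2) =
      Polynomial.C (B + C) * shiftedJacobi α β (n + 1)
        - Polynomial.C (2 * B) * (Polynomial.X * shiftedJacobi α β (n + 1))
        - Polynomial.C D * shiftedJacobi α β n := by
    ext k
    simp only [Polynomial.coeff_sub, Polynomial.coeff_C_mul]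
    cases k with
    | zero =>
      simp only [Polynomial.coeff_X_mul_zero, coeff_zero_shiftedJacobi, A, B, C, D]
      ring
    | succ k =>
      have hk : ((k : ℝ) + 1) * (α + 1 + k) ≠ 0 := by
        have : (0 : ℝ) ≤ k := k.cast_nonneg
        exact (mul_pos (by linarith) (by linarith)).ne'
      have h₂ := coeff_succ_shiftedJacobi_succ hα β (n + 1) k
      have h₁ := coeff_succ_shiftedJacobi hα β (n + 1) k
      have h₀ := coeff_shiftedJacobi_pred hα β n k
      rw [Polynomial.coeff_X_mul]
      refine mul_left_cancel₀ hk ?_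
      push_cast at h₀ h₁ h₂
      simp only [A, B, C, D]
      linear_combination 2 * (n + 2 + α) * (2 * n + 2 + α + β) * h₂ -
        (2 * n + 3 + α + β) * ((2 * n + 2 + α + β) * (2 * n + 4 + α + β) + (α ^ 2 - β ^ 2)) * h₁ +
        2 * (n + 1 + β) * (2 * n + 4 + α + β) * h₀
  have := congrArg (Polynomial.eval y) key
  simp only [Polynomial.eval_sub, Polynomial.eval_mul, Polynomial.eval_C, Polynomial.eval_X] at this
  rw [this]
  simp only [B, C]
  ring

lemma shiftedJacobi_ode (hα : -1 < α) (β : ℝ) (n : ℕ) (y : ℝ) :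
    y * (1 - y) * (shiftedJacobi α β n).derivative.derivative.eval y
      + (α + 1 - (α + β + 2) * y) * (shiftedJacobi α β n).derivative.eval y
      + n * (n + α + β + 1) * (shiftedJacobi α β n).eval y = 0 := by
  set p := shiftedJacobi α β n with hp
  have key : Polynomial.X * p.derivative.derivative
      - Polynomial.X * (Polynomial.X * p.derivative.derivative)
      + Polynomial.C (α + 1) * p.derivative
      - Polynomial.C (α + β + 2) * (Polynomial.X * p.derivative)
      + Polynomial.C (n * (n + α + β + 1)) * p = 0 := by
    ext k
    have hk := coeff_succ_shiftedJacobi hα β n k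
    rw [← hp] at hk
    simp only [Polynomial.coeff_sub, Polynomial.coeff_add, Polynomial.coeff_C_mul,
      Polynomial.coeff_zero]
    rcases k with _ | _ | k <;>
    · simp only [Polynomial.coeff_X_mul, Polynomial.coeff_X_mul_zero, Polynomial.coeff_derivative]
      push_cast at hk ⊢
      linear_combination hk
  have := congrArg (Polynomial.eval y) key
  simp only [Polynomial.eval_add, Polynomial.eval_sub, Polynomial.eval_mul, Polynomial.eval_X,
    Polynomial.eval_C, Polynomial.eval_zero] at this
  linear_combination this

end JacobiPolynomial

lemma shiftedJacobi_one_eval_eq_coef (d : ℕ) (y : ℝ) :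
    (shiftedJacobi (d / 2) 0 1).eval y = aCoef0 d * (1 - 2 * y) + bCoef0 d := by
  rw [shiftedJacobi_one_eval (by linarith [d.cast_nonneg (α := ℝ)]), aCoef0, bCoef0]
  field_simp
  ring

lemma shiftedJacobi_recurrence_coef (d n : ℕ) (y : ℝ) :
    (shiftedJacobi (d / 2) 0 (n + 2)).eval y =
      aCoef d (n + 1) * ((1 - 2 * y) * (shiftedJacobi (d / 2) 0 (n + 1)).eval y)
        + bCoef d (n + 1) * (shiftedJacobi (d / 2) 0 (n + 1)).eval y
        - cCoef d (n + 1) * (shiftedJacobi (d / 2) 0 n).eval y := by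
  have h := shiftedJacobi_recurrence (α := d / 2) (by linarith [d.cast_nonneg (α := ℝ)]) 0 n y
  have hA : (2 * (n + 2 + d / 2) * (n + 2 + d / 2 + 0) * (2 * n + 2 + d / 2 + 0) : ℝ) ≠ 0 := by
    positivity
  rw [← mul_right_inj' hA, h, aCoef, bCoef, cCoef]
  push_cast
  field_simp
  ring

section SoninPolya

-- The derivative of `y² + v² / φ` is `-(v / φ)² (φ' + 4 l φ)`.
lemma antitoneOn_sq_add_sq_div {s : Set ℝ} (hs : Convex ℝ s) {y v l φ φ' : ℝ → ℝ}
    (hyc : ContinuousOn y s) (hvc : ContinuousOn v s) (hφc : ContinuousOn φ s)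
    (hφ0 : ∀ t ∈ s, φ t ≠ 0) (hy : ∀ t ∈ interior s, HasDerivAt y (v t) t)
    (hv : ∀ t ∈ interior s, HasDerivAt v (-(2 * l t * v t) - φ t * y t) t)
    (hφ : ∀ t ∈ interior s, HasDerivAt φ (φ' t) t)
    (hmono : ∀ t ∈ interior s, 0 ≤ φ' t + 4 * l t * φ t) :
    AntitoneOn (fun t ↦ y t ^ 2 + v t ^ 2 / φ t) s := by
  refine antitoneOn_of_hasDerivWithinAt_nonpos
    (f' := fun t ↦ -((v t / φ t) ^ 2 * (φ' t + 4 * l t * φ t))) hs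
    ((hyc.pow 2).add ((hvc.pow 2).div hφc hφ0)) (fun t ht ↦ ?_) fun t ht ↦ ?_
  · have h0 := hφ0 t (interior_subset ht)
    refine (((hy t ht).pow 2).add (((hv t ht).pow 2).div (hφ t ht) h0)).congr_deriv ?_
      |>.hasDerivWithinAt
    simp only [Nat.cast_ofNat, Nat.reduceSub, pow_one, Pi.pow_apply]
    field_simp
    ring
  · exact neg_nonpos.2 (mul_nonneg (sq_nonneg _) (hmono t ht))

end SoninPolya

section JacobiDecay

variable {α β t : ℝ} {n : ℕ}

/-- The normalised Jacobi polynomial in the angle `t`, where `x = cos (2 t)`. -/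
def jacobiAngle (α β : ℝ) (n : ℕ) (t : ℝ) : ℝ := (shiftedJacobi α β n).eval (sin t ^ 2)

/-- Half the first-order coefficient of the Jacobi equation in the angle `t`; it is the logarithmic
derivative of `jacobiWeight`. -/
def jacobiDrift (α β t : ℝ) : ℝ :=
  ((2 * α + 1) * (cos t / sin t) - (2 * β + 1) * (sin t / cos t)) / 2

/-- The factor that removes the first-order term of the Jacobi equation in the angle `t`. -/
def jacobiWeight (α β t : ℝ) : ℝ := sin t ^ (α + 1 / 2) * cos t ^ (β + 1 / 2)

/-- The potential `φ` of the Liouville normal form `u'' + φ u = 0` of the Jacobi equation. -/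
def jacobiPotential (α β : ℝ) (n : ℕ) (t : ℝ) : ℝ :=
  (2 * n + α + β + 1) ^ 2 + (1 / 4 - α ^ 2) / sin t ^ 2 + (1 / 4 - β ^ 2) / cos t ^ 2

lemma hasDerivAt_sin_sq (t : ℝ) : HasDerivAt (fun t ↦ sin t ^ 2) (2 * sin t * cos t) t := by
  simpa using (hasDerivAt_sin t).fun_pow 2

lemma hasDerivAt_jacobiAngle (α β : ℝ) (n : ℕ) (t : ℝ) :
    HasDerivAt (jacobiAngle α β n)
      (2 * sin t * cos t * (shiftedJacobi α β n).derivative.eval (sin t ^ 2)) t := by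
  have h := ((shiftedJacobi α β n).hasDerivAt (sin t ^ 2)).comp t (hasDerivAt_sin_sq t)
  exact h.congr_deriv (mul_comm _ _)

lemma deriv_jacobiAngle (α β : ℝ) (n : ℕ) :
    deriv (jacobiAngle α β n) =
      fun t ↦ 2 * sin t * cos t * (shiftedJacobi α β n).derivative.eval (sin t ^ 2) :=
  funext fun t ↦ (hasDerivAt_jacobiAngle α β n t).deriv

lemma jacobiAngle_zero (α β : ℝ) (n : ℕ) : jacobiAngle α β n 0 = 1 := by
  simp [jacobiAngle, shiftedJacobi_eval_zero]

lemma hasDerivAt_deriv_jacobiAngle (hα : -1 < α) (β : ℝ) (n : ℕ) (hs : sin t ≠ 0)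
    (hc : cos t ≠ 0) :
    HasDerivAt (deriv (jacobiAngle α β n))
      (-(2 * jacobiDrift α β t * deriv (jacobiAngle α β n) t)
        - 4 * (n * (n + α + β + 1)) * jacobiAngle α β n t) t := by
  rw [deriv_jacobiAngle]
  have h := (((hasDerivAt_sin t).const_mul 2).mul (hasDerivAt_cos t)).mul
    (((shiftedJacobi α β n).derivative.hasDerivAt (sin t ^ 2)).comp t (hasDerivAt_sin_sq t))
  refine h.congr_deriv ?_
  have hode := shiftedJacobi_ode hα β n (sin t ^ 2)
  simp only [jacobiDrift, jacobiAngle, Function.comp_apply, Pi.mul_apply]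
  field_simp
  rw [cos_sq']
  linear_combination 4 * hode

lemma sin_pos_of_mem_Ioo (ht : t ∈ Set.Ioo 0 (π / 2)) : 0 < sin t :=
  sin_pos_of_pos_of_lt_pi ht.1 (by linarith [ht.2, pi_pos])

lemma cos_pos_of_mem_Ioo_zero (ht : t ∈ Set.Ioo 0 (π / 2)) : 0 < cos t :=
  cos_pos_of_mem_Ioo ⟨by linarith [ht.1, pi_pos], ht.2⟩

lemma jacobiDrift_nonneg (hα : -(1 / 2) ≤ α) (hβα : β ≤ α) (ht : t ∈ Set.Ioc 0 (π / 4)) :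
    0 ≤ jacobiDrift α β t := by
  have ht' : t ∈ Set.Ioo 0 (π / 2) := ⟨ht.1, by linarith [ht.2, pi_pos]⟩
  have hs := sin_pos_of_mem_Ioo ht'
  have hc := cos_pos_of_mem_Ioo_zero ht'
  have hsc : sin t ≤ cos t := by
    rw [← sin_pi_div_two_sub]
    exact sin_le_sin_of_le_of_le_pi_div_two (by linarith [ht.1, pi_pos]) (by linarith [ht.1])
      (by linarith [ht.2])
  have hle : (2 * β + 1) * (sin t / cos t) ≤ (2 * α + 1) * (cos t / sin t) := by
    refine mul_le_mul (by linarith) ?_ (by positivity) (by linarith)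
    exact ((div_le_one hc).2 hsc).trans ((one_le_div hs).2 hsc)
  unfold jacobiDrift
  linarith

lemma sq_jacobiAngle_add_le_one (hα : -(1 / 2) ≤ α) (hβ : -1 < β) (hβα : β ≤ α) (hn : n ≠ 0)
    (ht : t ∈ Set.Icc 0 (π / 4)) :
    jacobiAngle α β n t ^ 2
      + deriv (jacobiAngle α β n) t ^ 2 / (4 * (n * (n + α + β + 1))) ≤ 1 := by
  have hn1 : (1 : ℝ) ≤ n := by exact_mod_cast Nat.one_le_iff_ne_zero.2 hn
  have hpos : (0 : ℝ) < 4 * (n * (n + α + β + 1)) :=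
    mul_pos four_pos (mul_pos (by linarith) (by linarith))
  have hanti : AntitoneOn (fun t ↦ jacobiAngle α β n t ^ 2 + deriv (jacobiAngle α β n) t ^ 2 /
      (4 * (n * (n + α + β + 1)))) (Set.Icc 0 (π / 4)) := by
    refine antitoneOn_sq_add_sq_div (l := jacobiDrift α β) (φ' := fun _ ↦ 0) (convex_Icc _ _)
      ?_ ?_ continuousOn_const (fun _ _ ↦ hpos.ne') ?_ ?_ (fun _ _ ↦ hasDerivAt_const _ _) ?_
    · exact fun t _ ↦ (hasDerivAt_jacobiAngle α β n t).continuousAt.continuousWithinAt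
    · rw [deriv_jacobiAngle]
      fun_prop
    · exact fun t _ ↦ (hasDerivAt_jacobiAngle α β n t).differentiableAt.hasDerivAt
    · intro t ht
      rw [interior_Icc] at ht
      have ht' : t ∈ Set.Ioo 0 (π / 2) := ⟨ht.1, by linarith [ht.2, pi_pos]⟩
      exact hasDerivAt_deriv_jacobiAngle (by linarith) β n (sin_pos_of_mem_Ioo ht').ne'
        (cos_pos_of_mem_Ioo_zero ht').ne'
    · intro t ht
      rw [interior_Icc] at ht
      have := jacobiDrift_nonneg hα hβα ⟨ht.1, ht.2.le⟩
      positivity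
  simpa [jacobiAngle_zero, deriv_jacobiAngle] using hanti ⟨le_rfl, by positivity⟩ ht ht.1

lemma hasDerivAt_jacobiDrift (α β : ℝ) (hs : sin t ≠ 0) (hc : cos t ≠ 0) :
    HasDerivAt (jacobiDrift α β)
      (-((2 * α + 1) / sin t ^ 2 + (2 * β + 1) / cos t ^ 2) / 2) t := by
  have h := (((hasDerivAt_cos t).div (hasDerivAt_sin t) hs).const_mul (2 * α + 1)).sub
    (((hasDerivAt_sin t).div (hasDerivAt_cos t) hc).const_mul (2 * β + 1))
  refine (h.div_const 2).congr_deriv ?_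
  field_simp
  linear_combination -((2 * α + 1) * cos t ^ 2 + (2 * β + 1) * sin t ^ 2) * sin_sq_add_cos_sq t

lemma hasDerivAt_jacobiWeight (α β : ℝ) (hs : sin t ≠ 0) (hc : cos t ≠ 0) :
    HasDerivAt (jacobiWeight α β) (jacobiDrift α β t * jacobiWeight α β t) t := by
  have h := ((hasDerivAt_sin t).rpow_const (p := α + 1 / 2) (.inl hs)).mul
    ((hasDerivAt_cos t).rpow_const (p := β + 1 / 2) (.inl hc))
  refine h.congr_deriv ?_
  rw [rpow_sub_one hs, rpow_sub_one hc, jacobiDrift, jacobiWeight]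
  field_simp
  ring

lemma jacobiPotential_eq (α β : ℝ) (n : ℕ) (hs : sin t ≠ 0) (hc : cos t ≠ 0) :
    jacobiPotential α β n t = 4 * (n * (n + α + β + 1)) - jacobiDrift α β t ^ 2
      - -((2 * α + 1) / sin t ^ 2 + (2 * β + 1) / cos t ^ 2) / 2 := by
  unfold jacobiPotential jacobiDrift
  have h₁ : 1 / sin t ^ 2 = 1 + (cos t / sin t) ^ 2 := by
    field_simp
    exact (sin_sq_add_cos_sq t).symm
  have h₂ : 1 / cos t ^ 2 = 1 + (sin t / cos t) ^ 2 := by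
    field_simp
    exact (cos_sq_add_sin_sq t).symm
  have h₃ : cos t / sin t * (sin t / cos t) = 1 := by field_simp
  linear_combination -(2 * α + 1) ^ 2 / 4 * h₁ - (2 * β + 1) ^ 2 / 4 * h₂
    - (2 * α + 1) * (2 * β + 1) / 2 * h₃

lemma hasDerivAt_jacobiPotential (α β : ℝ) (n : ℕ) (hs : sin t ≠ 0) (hc : cos t ≠ 0) :
    HasDerivAt (jacobiPotential α β n)
      (2 * (α ^ 2 - 1 / 4) * cos t / sin t ^ 3 + 2 * (1 / 4 - β ^ 2) * sin t / cos t ^ 3) t := by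
  have h := ((((hasDerivAt_sin t).fun_pow 2).fun_inv (pow_ne_zero 2 hs)).const_mul
    (1 / 4 - α ^ 2)).const_add ((2 * n + α + β + 1) ^ 2) |>.add
    ((((hasDerivAt_cos t).fun_pow 2).fun_inv (pow_ne_zero 2 hc)).const_mul (1 / 4 - β ^ 2))
  refine h.congr_deriv ?_
  field_simp
  ring

/-- The solution `u = w p` of the Liouville normal form `u'' + φ u = 0`, where `w` is the weight
`jacobiWeight` and `p` the polynomial in the angle `t`. -/
def jacobiLiouville (α β : ℝ) (n : ℕ) (t : ℝ) : ℝ := jacobiWeight α β t * jacobiAngle α β n t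

/-- The derivative `w (p' + l p)` of `jacobiLiouville`. -/
def jacobiLiouvilleDeriv (α β : ℝ) (n : ℕ) (t : ℝ) : ℝ :=
  jacobiWeight α β t * (deriv (jacobiAngle α β n) t + jacobiDrift α β t * jacobiAngle α β n t)

lemma hasDerivAt_jacobiLiouville (α β : ℝ) (n : ℕ) (hs : sin t ≠ 0) (hc : cos t ≠ 0) :
    HasDerivAt (jacobiLiouville α β n) (jacobiLiouvilleDeriv α β n t) t := by
  refine ((hasDerivAt_jacobiWeight α β hs hc).mul
    (hasDerivAt_jacobiAngle α β n t).differentiableAt.hasDerivAt).congr_deriv ?_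
  unfold jacobiLiouvilleDeriv
  ring

lemma hasDerivAt_jacobiLiouvilleDeriv (hα : -1 < α) (β : ℝ) (n : ℕ) (hs : sin t ≠ 0)
    (hc : cos t ≠ 0) :
    HasDerivAt (jacobiLiouvilleDeriv α β n)
      (-(jacobiPotential α β n t * jacobiLiouville α β n t)) t := by
  refine ((hasDerivAt_jacobiWeight α β hs hc).mul
    ((hasDerivAt_deriv_jacobiAngle hα β n hs hc).add ((hasDerivAt_jacobiDrift α β hs hc).mul
      (hasDerivAt_jacobiAngle α β n t).differentiableAt.hasDerivAt))).congr_deriv ?_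
  rw [jacobiPotential_eq α β n hs hc, jacobiLiouville]
  simp only [Pi.add_apply, Pi.mul_apply]
  ring

lemma sq_jacobiLiouville_le {t₀ : ℝ} (hα : 1 / 2 ≤ α) (hβ : |β| ≤ 1 / 2) (ht₀ : 0 < t₀)
    (hφ : ∀ τ ∈ Set.Ico t₀ (π / 2), 0 < jacobiPotential α β n τ) (ht : t ∈ Set.Ico t₀ (π / 2)) :
    jacobiLiouville α β n t ^ 2 ≤ jacobiLiouville α β n t₀ ^ 2
      + jacobiLiouvilleDeriv α β n t₀ ^ 2 / jacobiPotential α β n t₀ := by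
  have hs : ∀ τ ∈ Set.Ico t₀ (π / 2), 0 < sin τ := fun τ hτ ↦
    sin_pos_of_mem_Ioo ⟨ht₀.trans_le hτ.1, hτ.2⟩
  have hc : ∀ τ ∈ Set.Ico t₀ (π / 2), 0 < cos τ := fun τ hτ ↦
    cos_pos_of_mem_Ioo_zero ⟨ht₀.trans_le hτ.1, hτ.2⟩
  have hu := fun τ hτ ↦ hasDerivAt_jacobiLiouville α β n (hs τ hτ).ne' (hc τ hτ).ne'
  have hv := fun τ hτ ↦ hasDerivAt_jacobiLiouvilleDeriv (α := α) (by linarith) β n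
    (hs τ hτ).ne' (hc τ hτ).ne'
  have hφ' := fun τ hτ ↦ hasDerivAt_jacobiPotential α β n (hs τ hτ).ne' (hc τ hτ).ne'
  have hanti := antitoneOn_sq_add_sq_div (l := fun _ ↦ 0) (convex_Ico t₀ (π / 2))
    (fun τ hτ ↦ (hu τ hτ).continuousAt.continuousWithinAt)
    (fun τ hτ ↦ (hv τ hτ).continuousAt.continuousWithinAt)
    (fun τ hτ ↦ (hφ' τ hτ).continuousAt.continuousWithinAt)
    (fun τ hτ ↦ (hφ τ hτ).ne') (fun τ hτ ↦ hu τ (interior_subset hτ))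
    (fun τ hτ ↦ (hv τ (interior_subset hτ)).congr_deriv (by ring))
    (fun τ hτ ↦ hφ' τ (interior_subset hτ)) fun τ hτ ↦ by
      have h₁ := hs τ (interior_subset hτ)
      have h₂ := hc τ (interior_subset hτ)
      have hα' : 0 ≤ α ^ 2 - 1 / 4 := by nlinarith
      have hβ' : 0 ≤ 1 / 4 - β ^ 2 := by nlinarith [abs_le.1 hβ]
      rw [mul_zero, zero_mul, add_zero]
      positivity
  refine le_trans (le_add_of_nonneg_right ?_) (hanti ⟨le_rfl, ht.1.trans_lt ht.2⟩ ht ht.1)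
  exact div_nonneg (sq_nonneg _) (hφ t ht).le

lemma half_le_sin (h0 : 0 ≤ t) (ht : t ≤ π / 2) : t / 2 ≤ sin t := by
  refine le_trans ?_ (mul_le_sin h0 ht)
  rw [div_mul_eq_mul_div, div_le_div_iff₀ two_pos pi_pos]
  nlinarith [pi_lt_four]

lemma three_mul_sq_le_jacobiPotential (hα : 1 / 2 ≤ α) (hβ : |β| ≤ 1 / 2) (hn : 8 * α ≤ n)
    (ht : t ∈ Set.Ico (2 * α / n) (π / 2)) : 3 * (n : ℝ) ^ 2 ≤ jacobiPotential α β n t := by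
  have hn0 : (0 : ℝ) < n := by linarith
  have ht0 : 0 < t := lt_of_lt_of_le (by positivity) ht.1
  have hβ' := abs_le.1 hβ
  have hsin : α / n ≤ sin t := by
    refine le_trans ?_ (half_le_sin ht0.le ht.2.le)
    linarith [ht.1, mul_div_assoc 2 α (n : ℝ)]
  have hsin0 : 0 < sin t := sin_pos_of_mem_Ioo ⟨ht0, ht.2⟩
  have h₁ : -(n : ℝ) ^ 2 ≤ (1 / 4 - α ^ 2) / sin t ^ 2 := by
    rw [le_div_iff₀ (by positivity)]
    have : α ^ 2 ≤ n ^ 2 * sin t ^ 2 := by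
      rw [← mul_pow]
      exact pow_le_pow_left₀ (by linarith) ((div_le_iff₀' hn0).1 hsin) 2
    linarith
  have h₂ : 0 ≤ (1 / 4 - β ^ 2) / cos t ^ 2 := div_nonneg (by nlinarith) (sq_nonneg _)
  have h₃ : (2 * n : ℝ) ^ 2 ≤ (2 * n + α + β + 1) ^ 2 :=
    pow_le_pow_left₀ (by positivity) (by linarith) 2
  unfold jacobiPotential
  linarith

lemma sq_jacobiWeight_le (hα : -(1 / 2) ≤ α) (hβ : -(1 / 2) ≤ β) (ht : t ∈ Set.Ico 0 (π / 2)) :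
    jacobiWeight α β t ^ 2 ≤ t ^ (2 * α + 1) := by
  have hs : 0 ≤ sin t := sin_nonneg_of_nonneg_of_le_pi ht.1 (by linarith [ht.2, pi_pos])
  have hc : 0 ≤ cos t := cos_nonneg_of_mem_Icc ⟨by linarith [ht.1, pi_pos], ht.2.le⟩
  have hsq : (sin t ^ (α + 1 / 2)) ^ 2 = sin t ^ (2 * α + 1) := by
    rw [← rpow_natCast, ← rpow_mul hs]
    congr 1
    push_cast
    ring
  rw [jacobiWeight, mul_pow, hsq]
  calc sin t ^ (2 * α + 1) * (cos t ^ (β + 1 / 2)) ^ 2 ≤ t ^ (2 * α + 1) * 1 := by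
        gcongr ?_ * ?_
        · exact rpow_nonneg ht.1 _
        · exact rpow_le_rpow hs (sin_le ht.1) (by linarith)
        · exact pow_le_one₀ (by positivity) (rpow_le_one hc (cos_le_one t) (by linarith))
    _ = t ^ (2 * α + 1) := mul_one _

lemma sq_add_mul_le {p q l L M : ℝ} (hM : 0 < M) (hl : l ^ 2 ≤ L) (h : p ^ 2 + q ^ 2 / M ≤ 1) :
    (q + l * p) ^ 2 ≤ M + L := by
  have hcs : (q + l * p) ^ 2 ≤ (M + l ^ 2) * (p ^ 2 + q ^ 2 / M) := by
    have : (M + l ^ 2) * (p ^ 2 + q ^ 2 / M) - (q + l * p) ^ 2 = (M * p - l * q) ^ 2 / M := by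
      field_simp
      ring
    linarith [div_nonneg (sq_nonneg (M * p - l * q)) hM.le]
  calc (q + l * p) ^ 2 ≤ (M + l ^ 2) * (p ^ 2 + q ^ 2 / M) := hcs
    _ ≤ (M + L) * 1 := by gcongr; linarith [sq_nonneg l]
    _ = M + L := mul_one _

lemma jacobiDrift_le (hα : 1 / 2 ≤ α) (hβ : -(1 / 2) ≤ β) (hn : 8 * α ≤ n) :
    jacobiDrift α β (2 * α / n) ≤ 2 * n := by
  have hn0 : (0 : ℝ) < n := by linarith
  have ht0 : 0 < 2 * α / n := by positivity
  have ht : 2 * α / n ≤ 1 / 4 := by rw [div_le_iff₀ hn0]; linarith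
  have hmem : 2 * α / n ∈ Set.Ioo 0 (π / 2) := ⟨ht0, by linarith [pi_gt_three]⟩
  have hs := sin_pos_of_mem_Ioo hmem
  have hc := cos_pos_of_mem_Ioo_zero hmem
  have hcot : cos (2 * α / n) / sin (2 * α / n) ≤ n / α := by
    refine div_le_of_le_mul₀ hs.le (by positivity) ?_
    calc cos (2 * α / n) ≤ 1 := cos_le_one _
      _ = n / α * (2 * α / n / 2) := by field_simp
      _ ≤ n / α * sin (2 * α / n) := by gcongr; exact half_le_sin ht0.le hmem.2.le
  have htan : 0 ≤ (2 * β + 1) * (sin (2 * α / n) / cos (2 * α / n)) :=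
    mul_nonneg (by linarith) (by positivity)
  calc jacobiDrift α β (2 * α / n) ≤ (2 * α + 1) * (n / α) / 2 := by
        have := mul_le_mul_of_nonneg_left hcot (by linarith : 0 ≤ 2 * α + 1)
        unfold jacobiDrift
        linarith
    _ ≤ (4 * α) * (n / α) / 2 := by gcongr; linarith
    _ = 2 * n := by field_simp; norm_num

lemma sq_jacobiLiouvilleDeriv_le (hα : 1 / 2 ≤ α) (hβ : |β| ≤ 1 / 2) (hn : 8 * α ≤ n) :
    jacobiLiouvilleDeriv α β n (2 * α / n) ^ 2 ≤
      (2 * α / n) ^ (2 * α + 1) * (10 * (n : ℝ) ^ 2) := by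
  have hβ' := abs_le.1 hβ
  have hn4 : (4 : ℝ) ≤ n := by linarith
  have ht : 2 * α / n ∈ Set.Ioc 0 (π / 4) :=
    ⟨by positivity, by rw [div_le_iff₀ (by linarith)]; nlinarith [pi_gt_three]⟩
  have hM : 4 * (n * (n + α + β + 1)) ≤ 6 * (n : ℝ) ^ 2 := by nlinarith
  have hM0 : 0 < 4 * (n * (n + α + β + 1)) := by
    exact mul_pos four_pos (mul_pos (by linarith) (by linarith))
  have hl : jacobiDrift α β (2 * α / n) ^ 2 ≤ (2 * n) ^ 2 :=
    pow_le_pow_left₀ (jacobiDrift_nonneg (by linarith) (by linarith) ht)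
      (jacobiDrift_le hα hβ'.1 hn) 2
  rw [jacobiLiouvilleDeriv, mul_pow]
  gcongr
  · exact sq_jacobiWeight_le (by linarith) hβ'.1 ⟨ht.1.le, by linarith [ht.2, pi_pos]⟩
  · refine (sq_add_mul_le hM0 hl (sq_jacobiAngle_add_le_one (by linarith) (by linarith)
      (by linarith) ?_ ⟨ht.1.le, ht.2⟩)).trans (by linarith)
    rintro rfl
    norm_num at hn4

lemma sq_jacobiLiouville_le_rpow_self (hα : -(1 / 2) ≤ α) (hβ : -(1 / 2) ≤ β) (hβα : β ≤ α)
    (hn : n ≠ 0) (ht : t ∈ Set.Icc 0 (π / 4)) :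
    jacobiLiouville α β n t ^ 2 ≤ t ^ (2 * α + 1) := by
  have hn1 : (1 : ℝ) ≤ n := by exact_mod_cast Nat.one_le_iff_ne_zero.2 hn
  have hp := sq_jacobiAngle_add_le_one hα (by linarith) hβα hn ht
  have hM : (0 : ℝ) ≤ 4 * (n * (n + α + β + 1)) :=
    mul_nonneg four_pos.le (mul_nonneg (by linarith) (by linarith))
  calc jacobiLiouville α β n t ^ 2 = jacobiWeight α β t ^ 2 * jacobiAngle α β n t ^ 2 :=
        mul_pow _ _ _
    _ ≤ t ^ (2 * α + 1) * 1 := by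
        gcongr ?_ * ?_
        · exact rpow_nonneg ht.1 _
        · exact sq_jacobiWeight_le hα hβ ⟨ht.1, by linarith [ht.2, pi_pos]⟩
        · linarith [div_nonneg (sq_nonneg (deriv (jacobiAngle α β n) t)) hM]
    _ = t ^ (2 * α + 1) := mul_one _

lemma sq_jacobiLiouville_le_rpow (hα : 1 / 2 ≤ α) (hβ : |β| ≤ 1 / 2) (hn : 8 * α ≤ n)
    (ht : t ∈ Set.Ico 0 (π / 2)) :
    jacobiLiouville α β n t ^ 2 ≤ 5 * (2 * α / n) ^ (2 * α + 1) := by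
  have hβ' := abs_le.1 hβ
  have hn4 : (4 : ℝ) ≤ n := by linarith
  have hn0 : n ≠ 0 := by rintro rfl; norm_num at hn4
  set t₀ : ℝ := 2 * α / n
  have ht₀ : t₀ ∈ Set.Ioc 0 (π / 4) :=
    ⟨by positivity, by rw [div_le_iff₀ (by linarith)]; nlinarith [pi_gt_three]⟩
  have hinit : ∀ τ ∈ Set.Icc 0 t₀, jacobiLiouville α β n τ ^ 2 ≤ t₀ ^ (2 * α + 1) := fun τ hτ ↦
    (sq_jacobiLiouville_le_rpow_self (by linarith) hβ'.1 (hβ'.2.trans hα) hn0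
      ⟨hτ.1, hτ.2.trans ht₀.2⟩).trans (rpow_le_rpow hτ.1 hτ.2 (by linarith))
  have hpos : 0 ≤ t₀ ^ (2 * α + 1) := rpow_nonneg ht₀.1.le _
  rcases le_total t t₀ with htt | htt
  · linarith [hinit t ⟨ht.1, htt⟩]
  have hφ : ∀ τ ∈ Set.Ico t₀ (π / 2), 3 * (n : ℝ) ^ 2 ≤ jacobiPotential α β n τ := fun τ hτ ↦
    three_mul_sq_le_jacobiPotential hα hβ hn hτ
  have hderiv : jacobiLiouvilleDeriv α β n t₀ ^ 2 / jacobiPotential α β n t₀ ≤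
      4 * t₀ ^ (2 * α + 1) := by
    have hφ₀ := hφ t₀ ⟨le_rfl, by linarith [ht₀.2, pi_pos]⟩
    rw [div_le_iff₀ (lt_of_lt_of_le (by positivity) hφ₀)]
    nlinarith [sq_jacobiLiouvilleDeriv_le hα hβ hn]
  linarith [sq_jacobiLiouville_le hα hβ ht₀.1
    (fun τ hτ ↦ lt_of_lt_of_le (by positivity) (hφ τ hτ)) ⟨htt, ht.2⟩,
    hinit t₀ ⟨ht₀.1.le, le_rfl⟩]

lemma jacobiAngle_arcsin_sqrt {y : ℝ} (α β : ℝ) (n : ℕ) (hy : y ∈ Set.Icc 0 1) :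
    jacobiAngle α β n (arcsin √y) = (shiftedJacobi α β n).eval y := by
  rw [jacobiAngle, sin_arcsin (by linarith [sqrt_nonneg y]) (sqrt_le_one.2 hy.2), sq_sqrt hy.1]

lemma jacobiWeight_arcsin_sqrt {y : ℝ} (α β : ℝ) (hy : y ∈ Set.Icc 0 1) :
    jacobiWeight α β (arcsin √y) ^ 2 = √y ^ (2 * α + 1) * √(1 - y) ^ (2 * β + 1) := by
  rw [jacobiWeight, sin_arcsin (by linarith [sqrt_nonneg y]) (sqrt_le_one.2 hy.2), cos_arcsin,
    sq_sqrt hy.1, mul_pow, ← rpow_natCast, ← rpow_natCast, ← rpow_mul (sqrt_nonneg _),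
    ← rpow_mul (sqrt_nonneg _)]
  congr 2 <;> push_cast <;> ring

lemma sq_shiftedJacobi_le_one {y : ℝ} (hα : -(1 / 2) ≤ α) (hβ : -1 < β) (hβα : β ≤ α)
    (hn : n ≠ 0) (hy : y ∈ Set.Icc 0 (1 / 2)) : (shiftedJacobi α β n).eval y ^ 2 ≤ 1 := by
  have hn1 : (1 : ℝ) ≤ n := by exact_mod_cast Nat.one_le_iff_ne_zero.2 hn
  have ht : arcsin √y ∈ Set.Icc 0 (π / 4) := by
    refine ⟨arcsin_nonneg.2 (sqrt_nonneg y), (arcsin_le_iff_le_sin' ?_).2 ?_⟩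
    · exact ⟨by linarith [pi_pos], by linarith [pi_pos]⟩
    · rw [sin_pi_div_four, sqrt_le_left (by positivity), div_pow, sq_sqrt two_pos.le]
      linarith [hy.2]
  rw [← jacobiAngle_arcsin_sqrt α β n ⟨hy.1, by linarith [hy.2]⟩]
  have hM : (0 : ℝ) ≤ 4 * (n * (n + α + β + 1)) :=
    mul_nonneg four_pos.le (mul_nonneg (by linarith) (by linarith))
  linarith [sq_jacobiAngle_add_le_one hα hβ hβα hn ht,
    div_nonneg (sq_nonneg (deriv (jacobiAngle α β n) (arcsin √y))) hM]

lemma rpow_mul_sq_shiftedJacobi_le {δ y : ℝ} (hα : 1 / 2 ≤ α) (hβ : |β| ≤ 1 / 2) (hδ : 0 < δ)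
    (hn : 8 * α ≤ n) (hy : y ∈ Set.Icc 0 (1 - δ)) :
    (n * √y) ^ (2 * α + 1) * (shiftedJacobi α β n).eval y ^ 2 ≤
      5 * (2 * α) ^ (2 * α + 1) / √δ ^ (2 * β + 1) := by
  have hn0 : (0 : ℝ) < n := by linarith
  have hy' : y ∈ Set.Icc 0 1 := ⟨hy.1, by linarith [hy.2]⟩
  have ht : arcsin √y ∈ Set.Ico 0 (π / 2) := by
    refine ⟨arcsin_nonneg.2 (sqrt_nonneg y), arcsin_lt_pi_div_two.2 ?_⟩
    rw [sqrt_lt' one_pos]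
    linarith [hy.2]
  have h := sq_jacobiLiouville_le_rpow hα hβ hn ht
  rw [jacobiLiouville, mul_pow, jacobiWeight_arcsin_sqrt α β hy',
    jacobiAngle_arcsin_sqrt α β n hy', div_rpow (by positivity) hn0.le, ← mul_div_assoc,
    le_div_iff₀ (by positivity)] at h
  rw [le_div_iff₀ (by positivity), mul_rpow hn0.le (sqrt_nonneg y)]
  calc (n : ℝ) ^ (2 * α + 1) * √y ^ (2 * α + 1) * (shiftedJacobi α β n).eval y ^ 2 *
          √δ ^ (2 * β + 1)
      ≤ (n : ℝ) ^ (2 * α + 1) * √y ^ (2 * α + 1) * (shiftedJacobi α β n).eval y ^ 2 *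
          √(1 - y) ^ (2 * β + 1) := by
        gcongr
        · linarith [(abs_le.1 hβ).1]
        · linarith [hy.2]
    _ ≤ 5 * (2 * α) ^ (2 * α + 1) := by linarith

theorem exists_sq_shiftedJacobi_le {δ : ℝ} (hα : 1 / 2 ≤ α) (hβ : |β| ≤ 1 / 2) (hδ : 0 < δ) :
    ∃ C, ∀ n : ℕ, 8 * α ≤ n → ∀ y ∈ Set.Icc 0 (1 - δ),
      (1 + n * √y) ^ (2 * α + 1) * (shiftedJacobi α β n).eval y ^ 2 ≤ C := by
  have hβ' := abs_le.1 hβ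
  set K : ℝ := 5 * (2 * α) ^ (2 * α + 1) / √δ ^ (2 * β + 1)
  have hK : 0 ≤ K := by positivity
  refine ⟨2 ^ (2 * α + 1) * (1 + K), fun n hn y hy ↦ ?_⟩
  have hn4 : (4 : ℝ) ≤ n := by linarith
  rcases le_total (n * √y) 1 with hle | hle
  · have hy2 : y ≤ 1 / 2 := by
      have : √y ≤ 1 / 4 := by nlinarith [sqrt_nonneg y]
      nlinarith [sq_sqrt hy.1, sqrt_nonneg y]
    gcongr
    · linarith
    · refine (sq_shiftedJacobi_le_one (by linarith) (by linarith) (hβ'.2.trans hα) ?_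
        ⟨hy.1, hy2⟩).trans (by linarith)
      rintro rfl
      norm_num at hn4
  · calc (1 + n * √y) ^ (2 * α + 1) * (shiftedJacobi α β n).eval y ^ 2
        ≤ (2 * (n * √y)) ^ (2 * α + 1) * (shiftedJacobi α β n).eval y ^ 2 := by
          gcongr
          linarith
      _ = 2 ^ (2 * α + 1) * ((n * √y) ^ (2 * α + 1) * (shiftedJacobi α β n).eval y ^ 2) := by
          rw [mul_rpow two_pos.le (by positivity), mul_assoc]
      _ ≤ 2 ^ (2 * α + 1) * (1 + K) := by
          gcongr
          linarith [rpow_mul_sq_shiftedJacobi_le hα hβ hδ hn hy]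

end JacobiDecay

section MehlerHeine

/-- The confluent hypergeometric limit function `₀F₁(; c; z) = ∑ₖ zᵏ / ((c)ₖ k!)`, the scaling limit
of the Jacobi polynomials near the end point `1`. -/
def confluentHypergeometricLimit (c z : ℝ) : ℝ :=
  ∑' k : ℕ, z ^ k / ((ascPochhammer ℝ k).eval c * k.factorial)

variable {c : ℝ}

lemma min_one_le_ascPochhammer_eval (hc : 0 < c) (k : ℕ) :
    min 1 c ≤ (ascPochhammer ℝ k).eval c := by
  induction k with
  | zero => simp
  | succ k ih =>
    rw [ascPochhammer_succ_eval]
    rcases k.eq_zero_or_pos with rfl | hk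
    · simp
    · have hk : (1 : ℝ) ≤ k := by exact_mod_cast hk
      exact ih.trans (le_mul_of_one_le_right (ascPochhammer_pos k c hc).le (by linarith))

lemma norm_div_ascPochhammer_mul_factorial_le (hc : 0 < c) {a R : ℝ} {k : ℕ}
    (ha : ‖a‖ ≤ R ^ k) :
    ‖a / ((ascPochhammer ℝ k).eval c * k.factorial)‖ ≤ (min 1 c)⁻¹ * (R ^ k / k.factorial) := by
  have hm : 0 < min 1 c := lt_min one_pos hc
  have hk := min_one_le_ascPochhammer_eval hc k
  rw [norm_div, norm_mul, Real.norm_of_nonneg (hm.le.trans hk), Real.norm_natCast]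
  calc ‖a‖ / ((ascPochhammer ℝ k).eval c * k.factorial)
      ≤ R ^ k / (min 1 c * k.factorial) := by
        gcongr
        exact (norm_nonneg a).trans ha
    _ = (min 1 c)⁻¹ * (R ^ k / k.factorial) := by field_simp

lemma hasSum_confluentHypergeometricLimit (hc : 0 < c) (z : ℝ) :
    HasSum (fun k : ℕ ↦ z ^ k / ((ascPochhammer ℝ k).eval c * k.factorial))
      (confluentHypergeometricLimit c z) :=
  (Summable.of_norm_bounded ((Real.summable_pow_div_factorial |z|).mul_left _) fun k ↦
    norm_div_ascPochhammer_mul_factorial_le hc (norm_pow z k).le).hasSum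

lemma continuous_confluentHypergeometricLimit (hc : 0 < c) :
    Continuous (confluentHypergeometricLimit c) := by
  refine continuous_iff_continuousAt.2 fun z₀ ↦ ?_
  have h : ContinuousOn (confluentHypergeometricLimit c) (Metric.closedBall 0 (‖z₀‖ + 1)) := by
    refine continuousOn_tsum (fun k ↦ by fun_prop)
      ((Real.summable_pow_div_factorial (‖z₀‖ + 1)).mul_left (min 1 c)⁻¹) fun k z hz ↦ ?_
    refine norm_div_ascPochhammer_mul_factorial_le hc ?_
    rw [norm_pow]
    gcongr
    simpa using hz
  refine h.continuousAt (Metric.closedBall_mem_nhds_of_mem ?_)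
  simp

variable {α β : ℝ}

lemma shiftedJacobi_eval_eq_tsum (α β : ℝ) (n : ℕ) (y : ℝ) :
    (shiftedJacobi α β n).eval y = ∑' k, (shiftedJacobi α β n).coeff k * y ^ k := by
  rw [Polynomial.eval_eq_sum_range' (natDegree_shiftedJacobi_lt α β n), tsum_eq_sum]
  intro k hk
  rw [Polynomial.coeff_eq_zero_of_natDegree_lt, zero_mul]
  have := natDegree_shiftedJacobi_lt α β n
  simp only [Finset.mem_range] at hk
  lia

lemma ascPochhammer_eval_eq_prod_range (a : ℝ) (k : ℕ) :
    (ascPochhammer ℝ k).eval a = ∏ j ∈ Finset.range k, (a + j) := by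
  induction k with
  | zero => simp
  | succ k ih => rw [ascPochhammer_succ_eval, ih, Finset.prod_range_succ]

lemma coeff_shiftedJacobi_mul_pow (α β : ℝ) (n k : ℕ) (y : ℝ) :
    (shiftedJacobi α β n).coeff k * y ^ k =
      (∏ j ∈ Finset.range k, (-n + j) * (n + α + β + 1 + j) * y) /
        ((ascPochhammer ℝ k).eval (α + 1) * k.factorial) := by
  simp only [coeff_shiftedJacobi, ordinaryHypergeometricCoefficient, Finset.prod_mul_distrib,
    Finset.prod_const, Finset.card_range, ← ascPochhammer_eval_eq_prod_range]
  ring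

lemma norm_coeff_shiftedJacobi_mul_pow_le (hα : -1 < α) {n k : ℕ} (hn : 1 ≤ n) {y R : ℝ}
    (hy : 0 ≤ y) (hR : (2 + |α + β + 1|) * (n ^ 2 * y) ≤ R) :
    ‖(shiftedJacobi α β n).coeff k * y ^ k‖ ≤
      (min 1 (α + 1))⁻¹ * (R ^ k / k.factorial) := by
  have hn' : (1 : ℝ) ≤ n := by exact_mod_cast hn
  have hR₀ : 0 ≤ R := le_trans (by positivity) hR
  have hα' : 0 < α + 1 := by linarith
  rcases lt_or_ge n k with hk | hk
  · have := natDegree_shiftedJacobi_lt α β n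
    rw [Polynomial.coeff_eq_zero_of_natDegree_lt (by lia), zero_mul, norm_zero]
    positivity
  rw [coeff_shiftedJacobi_mul_pow]
  refine norm_div_ascPochhammer_mul_factorial_le hα' ?_
  rw [norm_prod, ← Finset.card_range k, ← Finset.prod_const, Finset.card_range]
  refine Finset.prod_le_prod (fun _ _ ↦ norm_nonneg _) fun j hj ↦ ?_
  have hj : (j : ℝ) ≤ n := by exact_mod_cast (Finset.mem_range.1 hj).le.trans hk
  have h₁ : ‖-(n : ℝ) + j‖ ≤ n := by
    rw [Real.norm_eq_abs, abs_le]
    constructor <;> linarith [j.cast_nonneg (α := ℝ)]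
  have h₂ : ‖n + α + β + 1 + j‖ ≤ (2 + |α + β + 1|) * n := by
    calc ‖n + α + β + 1 + j‖ = |(n + j) + (α + β + 1)| := by
          rw [Real.norm_eq_abs]; ring_nf
      _ ≤ |(n + j : ℝ)| + |α + β + 1| := abs_add_le _ _
      _ ≤ 2 * n + |α + β + 1| * n := by
        rw [abs_of_nonneg (by positivity)]
        exact add_le_add (by linarith) (le_mul_of_one_le_right (abs_nonneg _) hn')
      _ = (2 + |α + β + 1|) * n := by ring
  calc ‖(-(n : ℝ) + j) * (n + α + β + 1 + j) * y‖
      ≤ n * ((2 + |α + β + 1|) * n) * y := by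
        rw [norm_mul, norm_mul, Real.norm_of_nonneg hy]
        gcongr
    _ = (2 + |α + β + 1|) * (n ^ 2 * y) := by ring
    _ ≤ R := hR

lemma tendsto_add_mul_add_mul (a b : ℝ) {y : ℕ → ℝ} {r : ℝ}
    (h : Tendsto (fun n : ℕ ↦ (n : ℝ) ^ 2 * y n) atTop (𝓝 r)) :
    Tendsto (fun n : ℕ ↦ (-n + a) * (n + b) * y n) atTop (𝓝 (-r)) := by
  have h₁ : Tendsto (fun n : ℕ ↦ (-1 + a / n) * (1 + b / n) * ((n : ℝ) ^ 2 * y n)) atTop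
      (𝓝 ((-1 + 0) * (1 + 0) * r)) :=
    ((tendsto_const_nhds.add (tendsto_const_div_atTop_nhds_zero_nat _)).mul
      (tendsto_const_nhds.add (tendsto_const_div_atTop_nhds_zero_nat _))).mul h
  rw [show (-1 + 0) * (1 + 0) * r = -r by ring] at h₁
  refine h₁.congr' ?_
  filter_upwards [eventually_ne_atTop 0] with n hn
  field_simp

theorem tendsto_shiftedJacobi_eval (hα : -1 < α) (β : ℝ) {y : ℕ → ℝ} {r : ℝ}
    (hy : ∀ n, 0 ≤ y n) (h : Tendsto (fun n : ℕ ↦ (n : ℝ) ^ 2 * y n) atTop (𝓝 r)) :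
    Tendsto (fun n ↦ (shiftedJacobi α β n).eval (y n)) atTop
      (𝓝 (confluentHypergeometricLimit (α + 1) (-r))) := by
  simp only [shiftedJacobi_eval_eq_tsum]
  refine tendsto_tsum_of_dominated_convergence
    ((Real.summable_pow_div_factorial ((2 + |α + β + 1|) * (r + 1))).mul_left
      (min 1 (α + 1))⁻¹) (fun k ↦ ?_) ?_
  · simp only [coeff_shiftedJacobi_mul_pow]
    refine Tendsto.div_const ?_ _
    have := tendsto_finsetProd (Finset.range k) fun j _ ↦
      tendsto_add_mul_add_mul j (α + β + 1 + j) h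
    simpa only [Finset.prod_const, Finset.card_range, ← add_assoc] using this
  · filter_upwards [h.eventually (eventually_le_nhds (lt_add_one r)), eventually_ge_atTop 1]
      with n hr hn k
    exact norm_coeff_shiftedJacobi_mul_pow_le hα hn (hy n) (by gcongr)

end MehlerHeine

section BallTransform

open Module ProbabilityTheory

variable {E : Type*} [NormedAddCommGroup E]

lemma integral_homogeneous_mul_fun_norm [NormedSpace ℝ E] [FiniteDimensional ℝ E] [Nontrivial E]
    [MeasurableSpace E] [BorelSpace E] (μ : Measure E) [μ.IsAddHaarMeasure] {h : E → ℝ} {m : ℕ}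
    (hh : ∀ r : ℝ, 0 < r → ∀ x, h (r • x) = r ^ m * h x) (f : ℝ → ℝ) :
    ∫ x, h x * f ‖x‖ ∂μ = (∫ u : Metric.sphere (0 : E) 1, h u ∂μ.toSphere) *
      ∫ r in Set.Ioi 0, r ^ (finrank ℝ E - 1 + m) * f r := by
  have polar : ∀ p : Metric.sphere (0 : E) 1 × Set.Ioi (0 : ℝ),
      h ((homeomorphUnitSphereProd E).symm p) * f ‖((homeomorphUnitSphereProd E).symm p : E)‖ =
        h p.1 * ((p.2 : ℝ) ^ m * f p.2) := by
    rintro ⟨u, r, hr⟩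
    rw [homeomorphUnitSphereProd_symm_apply_coe, hh r hr, norm_smul, norm_eq_of_mem_sphere,
      Real.norm_of_nonneg (le_of_lt hr)]
    ring_nf
  calc ∫ x, h x * f ‖x‖ ∂μ
      = ∫ x : ({0}ᶜ : Set E), h x * f ‖(x : E)‖ ∂μ.comap (↑) := by
        rw [integral_subtype_comap (measurableSet_singleton _).compl fun x ↦ h x * f ‖x‖,
          restrict_compl_singleton]
    _ = ∫ p, h p.1 * ((p.2 : ℝ) ^ m * f p.2)
          ∂μ.toSphere.prod (.volumeIoiPow (finrank ℝ E - 1)) := by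
        rw [← μ.measurePreserving_homeomorphUnitSphereProd.integral_comp
          (Homeomorph.measurableEmbedding _)]
        simp only [← polar, Homeomorph.symm_apply_apply]
    _ = (∫ u : Metric.sphere (0 : E) 1, h u ∂μ.toSphere) *
          ∫ r : Set.Ioi (0 : ℝ), (r : ℝ) ^ m * f r ∂.volumeIoiPow (finrank ℝ E - 1) :=
        integral_prod_mul (fun u : Metric.sphere (0 : E) 1 ↦ h u)
          fun r : Set.Ioi (0 : ℝ) ↦ (r : ℝ) ^ m * f r
    _ = _ := by
        simp only [Measure.volumeIoiPow, ENNReal.ofReal]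
        rw [integral_withDensity_eq_integral_smul
            (measurable_subtype_coe.pow_const _).real_toNNReal,
          integral_subtype_comap measurableSet_Ioi fun r ↦
            Real.toNNReal (r ^ (finrank ℝ E - 1)) • (r ^ m * f r),
          setIntegral_congr_fun measurableSet_Ioi fun r hr ↦ ?_]
        rw [NNReal.smul_def, Real.coe_toNNReal _ (pow_nonneg (le_of_lt hr) _), smul_eq_mul,
          pow_add, mul_assoc]

lemma integral_Ioi_pow_mul_indicator_Iic (n : ℕ) :
    ∫ r in Set.Ioi (0 : ℝ), r ^ n * (Set.Iic 1).indicator 1 r = 1 / (n + 1) := by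
  have h : ∀ r : ℝ, r ^ n * (Set.Iic 1).indicator 1 r = (Set.Iic 1).indicator (· ^ n) r :=
    fun r ↦ by by_cases hr : r ∈ Set.Iic (1 : ℝ) <;> simp [hr]
  simp only [h]
  rw [setIntegral_indicator measurableSet_Iic, Set.Ioi_inter_Iic,
    ← intervalIntegral.integral_of_le zero_le_one, integral_pow]
  simp

lemma integral_Ioi_pow_mul_exp_neg_sq_div_two (n : ℕ) :
    ∫ r in Set.Ioi (0 : ℝ), r ^ n * exp (-r ^ 2 / 2) =
      2 ^ ((n + 1 : ℝ) / 2) / (n + 1) * Gamma ((n + 1 : ℝ) / 2 + 1) := by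
  have h := integral_rpow_mul_exp_neg_mul_rpow (p := 2) (q := n) (b := 1 / 2) two_pos
    (by linarith [n.cast_nonneg (α := ℝ)]) (by norm_num)
  simp only [rpow_natCast, rpow_two] at h
  rw [Gamma_add_one (by positivity)]
  convert h using 1
  · congr! 3 with r
    ring_nf
  · rw [one_div, inv_rpow two_pos.le, neg_div, rpow_neg two_pos.le, inv_inv]
    field_simp

lemma setIntegral_closedBall_homogeneous [NormedSpace ℝ E] [FiniteDimensional ℝ E] [Nontrivial E]
    [MeasurableSpace E] [BorelSpace E] (μ : Measure E) [μ.IsAddHaarMeasure] {h : E → ℝ} {m : ℕ}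
    (hh : ∀ r : ℝ, 0 < r → ∀ x, h (r • x) = r ^ m * h x) :
    ∫ x in Metric.closedBall 0 1, h x ∂μ = (∫ x, h x * exp (-‖x‖ ^ 2 / 2) ∂μ) /
      (2 ^ ((finrank ℝ E + m : ℝ) / 2) * Gamma ((finrank ℝ E + m : ℝ) / 2 + 1)) := by
  have hind : (Metric.closedBall 0 1).indicator h =
      fun x : E ↦ h x * (Set.Iic 1).indicator 1 ‖x‖ := by
    ext x
    by_cases hx : ‖x‖ ≤ 1 <;> simp [hx]
  have hD : 1 ≤ finrank ℝ E := finrank_pos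
  have hcast : ((finrank ℝ E - 1 + m : ℕ) : ℝ) + 1 = finrank ℝ E + m := by
    push_cast [Nat.cast_sub hD]; ring
  have : (0 : ℝ) < finrank ℝ E + m := by positivity
  rw [← integral_indicator Metric.isClosed_closedBall.measurableSet, hind,
    integral_homogeneous_mul_fun_norm μ hh, integral_Ioi_pow_mul_indicator_Iic,
    integral_homogeneous_mul_fun_norm μ hh fun r ↦ exp (-r ^ 2 / 2),
    integral_Ioi_pow_mul_exp_neg_sq_div_two, hcast]
  have := (Gamma_pos_of_pos (show 0 < (finrank ℝ E + m : ℝ) / 2 + 1 by positivity)).ne'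
  field_simp

variable [InnerProductSpace ℝ E] [FiniteDimensional ℝ E] [MeasurableSpace E] [BorelSpace E]

lemma integrable_exp_neg_norm_sq_div_two : Integrable fun x : E ↦ exp (-‖x‖ ^ 2 / 2) := by
  refine (GaussianFourier.integrable_cexp_neg_mul_sq_norm_add (V := E) (b := (1 / 2 : ℝ))
    (by norm_num) 0 0).norm.congr (ae_of_all _ fun x ↦ ?_)
  simp only [Complex.norm_exp, zero_mul, add_zero, ← Complex.ofReal_pow, ← Complex.ofReal_neg,
    ← Complex.ofReal_mul, Complex.ofReal_re]
  ring_nf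

variable (E) in
lemma stdGaussian_eq_withDensity :
    stdGaussian E = volume.withDensity fun x : E ↦
      ENNReal.ofReal ((2 * π) ^ (-(finrank ℝ E / 2 : ℝ)) * exp (-‖x‖ ^ 2 / 2)) := by
  have := isFiniteMeasure_withDensity_ofReal
    ((integrable_exp_neg_norm_sq_div_two (E := E)).const_mul ((2 * π) ^ (-(finrank ℝ E / 2 : ℝ)))).2
  refine Measure.ext_of_charFun (funext fun t ↦ ?_)
  have h := GaussianFourier.integral_cexp_neg_mul_sq_norm_add (b := (1 / 2 : ℝ))
    (by norm_num) Complex.I t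
  have hintegrand : ∀ x : E,
      (ENNReal.ofReal ((2 * π) ^ (-(finrank ℝ E / 2 : ℝ)) * exp (-‖x‖ ^ 2 / 2))).toReal •
        Complex.exp (inner ℝ x t * Complex.I) =
      ((2 * π) ^ (-(finrank ℝ E / 2 : ℝ)) : ℝ) *
        Complex.exp (-(1 / 2 : ℝ) * ‖x‖ ^ 2 + Complex.I * inner ℝ t x) := fun x ↦ by
    rw [ENNReal.toReal_ofReal (by positivity), Complex.real_smul, Complex.ofReal_mul, mul_assoc,
      Complex.ofReal_exp, ← Complex.exp_add, real_inner_comm]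
    push_cast
    ring_nf
  rw [charFun_stdGaussian, charFun_apply, integral_withDensity_eq_integral_toReal_smul
    (by fun_prop) (ae_of_all _ fun _ ↦ ENNReal.ofReal_lt_top)]
  simp only [hintegrand]
  rw [integral_const_mul, h]
  have hpow : (π / (1 / 2 : ℝ) : ℂ) ^ (finrank ℝ E / 2 : ℂ) =
      ((2 * π) ^ (finrank ℝ E / 2 : ℝ) : ℝ) := by
    rw [Complex.ofReal_cpow (by positivity)]
    push_cast
    ring_nf
  rw [hpow, ← mul_assoc, ← Complex.ofReal_mul, ← rpow_add (by positivity), neg_add_cancel,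
    rpow_zero, Complex.ofReal_one, one_mul, Complex.I_sq]
  push_cast
  ring_nf

lemma integral_mul_exp_neg_norm_sq_div_two (f : E → ℝ) :
    ∫ x, f x * exp (-‖x‖ ^ 2 / 2) =
      (2 * π) ^ (finrank ℝ E / 2 : ℝ) * ∫ x, f x ∂stdGaussian E := by
  rw [stdGaussian_eq_withDensity, integral_withDensity_eq_integral_toReal_smul (by fun_prop)
    (ae_of_all _ fun _ ↦ ENNReal.ofReal_lt_top), ← integral_const_mul]
  refine integral_congr_ae (ae_of_all _ fun x ↦ ?_)
  simp only [smul_eq_mul]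
  rw [ENNReal.toReal_ofReal (by positivity), rpow_neg (by positivity)]
  have : (2 * π) ^ (finrank ℝ E / 2 : ℝ) ≠ 0 := by positivity
  field_simp

lemma integral_pow_gaussianReal (k : ℕ) :
    ∫ s, s ^ (2 * k) ∂gaussianReal 0 1 = (2 * k).factorial / (2 ^ k * k.factorial) := by
  have habs : ∀ s : ℝ, gaussianPDFReal 0 1 s • s ^ (2 * k) =
      (√(2 * π))⁻¹ * (|s| ^ (2 * k) * exp (-|s| ^ 2 / 2)) := fun s ↦ by
    rw [gaussianPDFReal, NNReal.coe_one, mul_one, mul_one, sub_zero, sq_abs, pow_mul, pow_mul,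
      sq_abs, smul_eq_mul]
    ring
  have hfact : ((2 * k + 1 : ℕ).factorial : ℝ) =
      (2 * k + 1).doubleFactorial * (2 ^ k * k.factorial) := by
    rw [Nat.factorial_eq_mul_doubleFactorial, Nat.doubleFactorial_two_mul]
    push_cast
    rfl
  rw [integral_gaussianReal_eq_integral_smul one_ne_zero]
  simp only [habs]
  rw [integral_const_mul, integral_comp_abs (f := fun s ↦ s ^ (2 * k) * exp (-s ^ 2 / 2)),
    integral_Ioi_pow_mul_exp_neg_sq_div_two]
  have hΓ : Gamma (((2 * k : ℕ) + 1 : ℝ) / 2 + 1) =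
      (2 * k + 1).doubleFactorial * √π / 2 ^ (k + 1) := by
    have h := Gamma_nat_add_half (k + 1)
    rw [show 2 * (k + 1) - 1 = 2 * k + 1 by lia] at h
    rw [← h]
    push_cast
    ring_nf
  have hpow : (2 : ℝ) ^ (((2 * k : ℕ) + 1 : ℝ) / 2) = 2 ^ k * √2 := by
    rw [sqrt_eq_rpow, ← rpow_natCast, ← rpow_add two_pos]
    push_cast
    ring_nf
  rw [Nat.factorial_succ] at hfact
  rw [hΓ, hpow, sqrt_mul two_pos.le]
  have : √π ≠ 0 := by positivity
  push_cast at hfact ⊢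
  field_simp
  linear_combination -2 ^ (k + 1) * hfact

lemma integral_inner_pow_stdGaussian (ζ : E) (k : ℕ) :
    ∫ x, inner ℝ ζ x ^ (2 * k) ∂stdGaussian E =
      ‖ζ‖ ^ (2 * k) * ((2 * k).factorial / (2 ^ k * k.factorial)) := by
  have hmap : (stdGaussian E).map (innerSL ℝ ζ) = (gaussianReal 0 1).map (‖ζ‖ * ·) := by
    rw [IsGaussian.map_eq_gaussianReal, integral_strongDual_stdGaussian,
      variance_dual_stdGaussian, innerSL_apply_norm, gaussianReal_map_const_mul, mul_zero, mul_one]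
    congr 1
    exact Real.toNNReal_of_nonneg _
  have h := integral_map (μ := stdGaussian E) (φ := innerSL ℝ ζ) (by fun_prop)
    (f := (· ^ (2 * k))) (by fun_prop)
  simp only [innerSL_apply_apply] at h
  rw [← h, hmap, integral_map (by fun_prop) (by fun_prop)]
  simp only [mul_pow]
  rw [integral_const_mul, integral_pow_gaussianReal]

lemma Gamma_add_natCast_eq_ascPochhammer_mul {a : ℝ} (ha : 0 < a) (k : ℕ) :
    Gamma (a + k) = (ascPochhammer ℝ k).eval a * Gamma a := by
  induction k with
  | zero => simp
  | succ k ih =>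
    rw [Nat.cast_succ, ← add_assoc, Gamma_add_one (by positivity), ih, ascPochhammer_succ_eval]
    ring

lemma setIntegral_closedBall_inner_pow [Nontrivial E] (ζ : E) (k : ℕ) :
    ∫ x in Metric.closedBall 0 1, inner ℝ ζ x ^ (2 * k) =
      π ^ (finrank ℝ E / 2 : ℝ) / Gamma (finrank ℝ E / 2 + 1) *
        ((2 * k).factorial * (‖ζ‖ ^ 2 / 4) ^ k /
          ((ascPochhammer ℝ k).eval (finrank ℝ E / 2 + 1 : ℝ) * k.factorial)) := by
  have : 0 < (ascPochhammer ℝ k).eval (finrank ℝ E / 2 + 1 : ℝ) :=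
    ascPochhammer_pos _ _ (by positivity)
  have : 0 < Gamma (finrank ℝ E / 2 + 1 : ℝ) := Gamma_pos_of_pos (by positivity)
  have hexp : ((finrank ℝ E + (2 * k : ℕ) : ℝ) / 2) = finrank ℝ E / 2 + k := by
    push_cast; ring
  rw [setIntegral_closedBall_homogeneous volume (h := fun x ↦ inner ℝ ζ x ^ (2 * k))
      fun r _ x ↦ by rw [inner_smul_right, mul_pow],
    integral_mul_exp_neg_norm_sq_div_two, integral_inner_pow_stdGaussian, hexp, add_right_comm,
    Gamma_add_natCast_eq_ascPochhammer_mul (by positivity), rpow_add two_pos,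
    mul_rpow two_pos.le pi_pos.le, rpow_natCast, div_pow, pow_mul,
    show (4 : ℝ) = 2 * 2 by norm_num, mul_pow]
  field_simp

theorem setIntegral_closedBall_cos_inner [Nontrivial E] (ζ : E) :
    ∫ x in Metric.closedBall 0 1, cos (inner ℝ ζ x) =
      π ^ (finrank ℝ E / 2 : ℝ) / Gamma (finrank ℝ E / 2 + 1) *
        confluentHypergeometricLimit (finrank ℝ E / 2 + 1) (-(‖ζ‖ ^ 2 / 4)) := by
  have hfin : IsFiniteMeasure (volume.restrict (Metric.closedBall (0 : E) 1)) :=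
    ⟨by simpa using measure_closedBall_lt_top⟩
  have hle : ∀ᵐ x ∂volume.restrict (Metric.closedBall (0 : E) 1), |inner ℝ ζ x| ≤ ‖ζ‖ := by
    filter_upwards [ae_restrict_mem Metric.isClosed_closedBall.measurableSet] with x hx
    exact (abs_real_inner_le_norm ζ x).trans
      (mul_le_of_le_one_right (norm_nonneg ζ) (by simpa using hx))
  have hsum := hasSum_integral_of_dominated_convergence
    (μ := volume.restrict (Metric.closedBall (0 : E) 1))
    (F := fun (k : ℕ) x ↦ (-1) ^ k * inner ℝ ζ x ^ (2 * k) / (2 * k).factorial)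
    (fun k _ ↦ ‖ζ‖ ^ (2 * k) / (2 * k).factorial) (fun k ↦ by fun_prop)
    (fun k ↦ by
      filter_upwards [hle] with x hx
      rw [norm_div, norm_mul, norm_pow, norm_neg, norm_one, one_pow, one_mul, norm_pow,
        Real.norm_natCast]
      gcongr
      exact hx)
    (ae_of_all _ fun _ ↦ (Real.hasSum_cosh ‖ζ‖).summable)
    (integrable_const _) (ae_of_all _ fun x ↦ Real.hasSum_cos (inner ℝ ζ x))
  have hlim := (hasSum_confluentHypergeometricLimit
    (show (0 : ℝ) < finrank ℝ E / 2 + 1 by positivity) (-(‖ζ‖ ^ 2 / 4))).mul_left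
      (π ^ (finrank ℝ E / 2 : ℝ) / Gamma (finrank ℝ E / 2 + 1))
  refine hsum.unique (hlim.congr_fun fun k ↦ ?_)
  have : ((2 * k).factorial : ℝ) ≠ 0 := by positivity
  rw [integral_div, integral_const_mul, setIntegral_closedBall_inner_pow,
    neg_pow (‖ζ‖ ^ 2 / 4)]
  field_simp

lemma setIntegral_closedBall_cos_sub_inner (ζ : E) (a r : ℝ) :
    ∫ x in Metric.closedBall 0 r, cos (a - inner ℝ ζ x)
      = cos a * ∫ x in Metric.closedBall 0 r, cos (inner ℝ ζ x) := by
  have hint {f : E → ℝ} (hf : Continuous f) : IntegrableOn f (Metric.closedBall 0 r) :=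
    hf.continuousOn.integrableOn_compact (isCompact_closedBall 0 r)
  have hsin : ∫ x in Metric.closedBall (0 : E) r, sin (inner ℝ ζ x) = 0 := by
    have hodd := (Measure.measurePreserving_neg (volume : Measure E)).setIntegral_preimage_emb
      (MeasurableEquiv.neg E).measurableEmbedding (fun x ↦ sin (inner ℝ ζ x))
      (Metric.closedBall 0 r)
    simp only [neg_closedBall, Set.neg_preimage, neg_zero, inner_neg_right, sin_neg,
      integral_neg] at hodd
    linarith
  simp only [cos_sub]
  rw [integral_add ((hint (by fun_prop)).const_mul (cos a))
    ((hint (by fun_prop)).const_mul (sin a)), integral_const_mul, integral_const_mul, hsin,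
    mul_zero, add_zero]

end BallTransform

section TorusFourier

variable {ι : Type*}

/-- The fundamental domain `[-π, π]^ι` of the dual torus of the lattice `ι → ℤ`. -/
def dualCube (ι : Type*) : Set (ι → ℝ) := Set.Icc (fun _ ↦ -π) (fun _ ↦ π)

lemma mem_dualCube {ξ : ι → ℝ} : ξ ∈ dualCube ι ↔ ∀ i, ξ i ∈ Set.Icc (-π) π := by
  simp only [dualCube, Set.mem_Icc, Pi.le_def, forall_and]

lemma isCompact_dualCube : IsCompact (dualCube ι) := isCompact_Icc

variable [Fintype ι]

lemma volume_dualCube : volume (dualCube ι) = ENNReal.ofReal ((2 * π) ^ Fintype.card ι) := by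
  rw [dualCube, Real.volume_Icc_pi, Finset.prod_const, Finset.card_univ,
    ← ENNReal.ofReal_pow (by linarith [pi_pos])]
  ring_nf

/-- The Haar probability measure of the dual torus, as a measure on the fundamental domain. -/
def torusMeasure (ι : Type*) [Fintype ι] : Measure (ι → ℝ) :=
  ProbabilityTheory.cond volume (dualCube ι)

instance : IsProbabilityMeasure (torusMeasure ι) :=
  ProbabilityTheory.cond_isProbabilityMeasure_of_finite
    (by rw [volume_dualCube]; exact (ENNReal.ofReal_pos.2 (by positivity)).ne')
    isCompact_dualCube.measure_ne_top

lemma integral_torusMeasure {E : Type*} [NormedAddCommGroup E] [NormedSpace ℝ E]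
    (f : (ι → ℝ) → E) :
    ∫ ξ, f ξ ∂torusMeasure ι = ((2 * π) ^ Fintype.card ι)⁻¹ • ∫ ξ in dualCube ι, f ξ := by
  rw [torusMeasure, ProbabilityTheory.cond, integral_smul_measure, volume_dualCube,
    ENNReal.toReal_inv, ENNReal.toReal_ofReal (by positivity)]

lemma memLp_torusMeasure {E : Type*} [NormedAddCommGroup E] [SecondCountableTopology E]
    {f : (ι → ℝ) → E} (hf : Continuous f) (p : ENNReal) : MemLp f p (torusMeasure ι) := by
  obtain ⟨C, hC⟩ := isCompact_dualCube.exists_bound_of_continuousOn hf.continuousOn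
  exact .of_bound hf.aestronglyMeasurable C
    ((ProbabilityTheory.ae_cond_mem isCompact_dualCube.measurableSet).mono hC)

lemma integrable_torusMeasure {E : Type*} [NormedAddCommGroup E] [SecondCountableTopology E]
    {f : (ι → ℝ) → E} (hf : Continuous f) : Integrable f (torusMeasure ι) :=
  memLp_one_iff_integrable.1 (memLp_torusMeasure hf 1)

lemma integral_Icc_cexp_mul_I (a : ℝ) :
    ∫ t in Set.Icc (-π) π, Complex.exp ((t * a : ℝ) * Complex.I) = (2 * π * sinc (π * a) : ℝ) := by
  rw [integral_Icc_eq_integral_Ioc, ← intervalIntegral.integral_of_le (by linarith [pi_pos])]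
  rcases eq_or_ne a 0 with rfl | ha
  · simp only [mul_zero, Complex.ofReal_zero, zero_mul, Complex.exp_zero, sinc_zero,
      intervalIntegral.integral_const, Complex.real_smul]
    push_cast
    ring
  have hc : (a : ℂ) * Complex.I ≠ 0 := mul_ne_zero (by exact_mod_cast ha) Complex.I_ne_zero
  have hexp (t : ℝ) : Complex.exp (a * Complex.I * t) = cos (t * a) + sin (t * a) * Complex.I := by
    rw [show (a : ℂ) * Complex.I * t = (t * a : ℝ) * Complex.I by push_cast; ring,
      Complex.exp_ofReal_mul_I]
  calc ∫ t in -π..π, Complex.exp ((t * a : ℝ) * Complex.I)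
      = ∫ t in -π..π, Complex.exp (a * Complex.I * t) := by
        refine intervalIntegral.integral_congr fun t _ ↦ ?_
        push_cast
        ring_nf
    _ = (2 * π * sinc (π * a) : ℝ) := by
        rw [integral_exp_mul_complex hc, hexp, hexp, sinc_of_ne_zero (by positivity), neg_mul,
          cos_neg, sin_neg]
        have : (a : ℂ) ≠ 0 := by exact_mod_cast ha
        have : (π : ℂ) ≠ 0 := by exact_mod_cast pi_ne_zero
        push_cast
        field_simp
        ring

lemma integral_cexp_torusMeasure (a : ι → ℝ) :
    ∫ ξ, Complex.exp ((ξ ⬝ᵥ a : ℝ) * Complex.I) ∂torusMeasure ι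
      = (∏ i, sinc (π * a i) : ℝ) := by
  have hprod (ξ : ι → ℝ) : Complex.exp ((ξ ⬝ᵥ a : ℝ) * Complex.I)
      = ∏ i, Complex.exp ((ξ i * a i : ℝ) * Complex.I) := by
    rw [← Complex.exp_sum, ← Finset.sum_mul, dotProduct, Complex.ofReal_sum]
  rw [integral_torusMeasure, dualCube, ← Set.pi_univ_Icc, volume_pi, Measure.restrict_pi_pi]
  simp only [hprod]
  rw [integral_fintype_prod_eq_prod (fun i t ↦ Complex.exp ((t * a i : ℝ) * Complex.I))]
  simp only [integral_Icc_cexp_mul_I]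
  rw [← Complex.ofReal_prod, Finset.prod_mul_distrib, Finset.prod_const, Finset.card_univ,
    Complex.real_smul, ← Complex.ofReal_mul, inv_mul_cancel_left₀ (by positivity)]

lemma integral_cos_torusMeasure (a : ι → ℝ) :
    ∫ ξ, cos (ξ ⬝ᵥ a) ∂torusMeasure ι = ∏ i, sinc (π * a i) := by
  have hint : Integrable (fun ξ ↦ Complex.exp ((ξ ⬝ᵥ a : ℝ) * Complex.I)) (torusMeasure ι) :=
    integrable_torusMeasure (by unfold dotProduct; fun_prop)
  have := integral_re hint
  simpa only [integral_cexp_torusMeasure, RCLike.re_to_complex, Complex.exp_ofReal_mul_I_re,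
    Complex.ofReal_re] using this

/-- The pairing of a frequency `ξ` with a lattice point `v`. -/
def latticePairing (ξ : ι → ℝ) (v : ι → ℤ) : ℝ := ξ ⬝ᵥ fun i ↦ (v i : ℝ)

lemma latticePairing_zero_left (v : ι → ℤ) : latticePairing 0 v = 0 := zero_dotProduct _

lemma latticePairing_sub (ξ : ι → ℝ) (v w : ι → ℤ) :
    latticePairing ξ (v - w) = latticePairing ξ v - latticePairing ξ w := by
  simp [latticePairing, dotProduct, mul_sub]

lemma latticePairing_neg (ξ : ι → ℝ) (v : ι → ℤ) :
    latticePairing ξ (-v) = -latticePairing ξ v := by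
  simp [latticePairing, dotProduct]

lemma latticePairing_smul (c : ℝ) (ξ : ι → ℝ) (v : ι → ℤ) :
    latticePairing (c • ξ) v = c * latticePairing ξ v := smul_dotProduct c ξ _

@[fun_prop]
lemma continuous_latticePairing (v : ι → ℤ) : Continuous fun ξ ↦ latticePairing ξ v := by
  unfold latticePairing dotProduct
  fun_prop

lemma prod_sinc_intCast (v : ι → ℤ) :
    ∏ i, sinc (π * v i) = if v = 0 then 1 else 0 := by
  split_ifs with hv
  · simp [hv]
  · obtain ⟨i, hi⟩ := Function.ne_iff.1 hv
    refine Finset.prod_eq_zero (Finset.mem_univ i) ?_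
    rw [sinc_of_ne_zero (mul_ne_zero pi_ne_zero (by exact_mod_cast hi)), mul_comm,
      sin_int_mul_pi, zero_div]

/-- The cosine Fourier coefficients of a function on the dual torus. -/
def cosCoeff (F : (ι → ℝ) → ℝ) (v : ι → ℤ) : ℝ :=
  ∫ ξ, F ξ * cos (latticePairing ξ v) ∂torusMeasure ι

lemma integrable_mul_cos_latticePairing {F : (ι → ℝ) → ℝ} (hF : Integrable F (torusMeasure ι))
    (v : ι → ℤ) : Integrable (fun ξ ↦ F ξ * cos (latticePairing ξ v)) (torusMeasure ι) :=
  hF.mul_bdd (c := 1) (by fun_prop) (ae_of_all _ fun _ ↦ abs_cos_le_one _)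

lemma cosCoeff_one (v : ι → ℤ) :
    cosCoeff (fun _ ↦ 1) v = if v = 0 then 1 else 0 := by
  simp only [cosCoeff, one_mul, latticePairing, integral_cos_torusMeasure, prod_sinc_intCast]

lemma cosCoeff_const_mul (c : ℝ) (F : (ι → ℝ) → ℝ) (v : ι → ℤ) :
    cosCoeff (fun ξ ↦ c * F ξ) v = c * cosCoeff F v := by
  simp only [cosCoeff, mul_assoc, integral_const_mul]

lemma cosCoeff_add {F G : (ι → ℝ) → ℝ} (hF : Integrable F (torusMeasure ι))
    (hG : Integrable G (torusMeasure ι)) (v : ι → ℤ) :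
    cosCoeff (fun ξ ↦ F ξ + G ξ) v = cosCoeff F v + cosCoeff G v := by
  simp only [cosCoeff, add_mul]
  exact integral_add (integrable_mul_cos_latticePairing hF v)
    (integrable_mul_cos_latticePairing hG v)

lemma cosCoeff_sub {F G : (ι → ℝ) → ℝ} (hF : Integrable F (torusMeasure ι))
    (hG : Integrable G (torusMeasure ι)) (v : ι → ℤ) :
    cosCoeff (fun ξ ↦ F ξ - G ξ) v = cosCoeff F v - cosCoeff G v := by
  simp only [cosCoeff, sub_mul]
  exact integral_sub (integrable_mul_cos_latticePairing hF v)
    (integrable_mul_cos_latticePairing hG v)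

lemma sum_norm_sq_integral_conj_mul_le {X κ : Type*} [MeasurableSpace X] [DecidableEq κ]
    {μ : Measure X} {e : κ → X → ℂ} (he : ∀ k, MemLp (e k) 2 μ)
    (horth : ∀ k l, ∫ x, e l x * starRingEnd ℂ (e k x) ∂μ = if k = l then 1 else 0)
    {F : X → ℂ} (hF : MemLp F 2 μ) (s : Finset κ) :
    ∑ k ∈ s, ‖∫ x, F x * starRingEnd ℂ (e k x) ∂μ‖ ^ 2 ≤ ∫ x, ‖F x‖ ^ 2 ∂μ := by
  have hinner {f g : X → ℂ} (hf : MemLp f 2 μ) (hg : MemLp g 2 μ) :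
      inner ℂ (hf.toLp f) (hg.toLp g) = ∫ x, g x * starRingEnd ℂ (f x) ∂μ := by
    rw [L2.inner_def]
    refine integral_congr_ae ?_
    filter_upwards [hf.coeFn_toLp, hg.coeFn_toLp] with x hfx hgx
    rw [hfx, hgx, RCLike.inner_apply]
  have hnorm : ‖hF.toLp F‖ ^ 2 = ∫ x, ‖F x‖ ^ 2 ∂μ := by
    have hself : inner ℂ (hF.toLp F) (hF.toLp F) = ((∫ x, ‖F x‖ ^ 2 ∂μ : ℝ) : ℂ) := by
      rw [hinner, ← integral_complex_ofReal]
      simp only [Complex.mul_conj', Complex.ofReal_pow]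
    rw [← inner_self_eq_norm_sq (𝕜 := ℂ), hself]
    exact Complex.ofReal_re _
  have hon : Orthonormal ℂ fun k ↦ (he k).toLp (e k) :=
    orthonormal_iff_ite.2 fun k l ↦ (hinner _ _).trans (horth k l)
  simpa only [hinner, hnorm] using hon.sum_inner_products_le (hF.toLp F)

/-- The character `ξ ↦ exp (i⟨ξ, v⟩)` of the dual torus. -/
def torusCharacter (v : ι → ℤ) (ξ : ι → ℝ) : ℂ :=
  Complex.exp (latticePairing ξ v * Complex.I)

lemma continuous_torusCharacter (v : ι → ℤ) : Continuous (torusCharacter v) := by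
  unfold torusCharacter
  fun_prop

lemma torusCharacter_mul_conj (v w : ι → ℤ) (ξ : ι → ℝ) :
    torusCharacter w ξ * starRingEnd ℂ (torusCharacter v ξ) = torusCharacter (w - v) ξ := by
  rw [torusCharacter, torusCharacter, torusCharacter, ← Complex.exp_conj, ← Complex.exp_add,
    latticePairing_sub, map_mul, Complex.conj_ofReal, Complex.conj_I]
  push_cast
  ring_nf

lemma integral_torusCharacter_mul_conj (v w : ι → ℤ) :
    ∫ ξ, torusCharacter w ξ * starRingEnd ℂ (torusCharacter v ξ) ∂torusMeasure ι
      = if v = w then 1 else 0 := by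
  simp only [torusCharacter_mul_conj]
  simp only [torusCharacter, latticePairing, integral_cexp_torusMeasure, prod_sinc_intCast,
    sub_eq_zero, eq_comm (a := w) (b := v)]
  split_ifs <;> simp only [Complex.ofReal_one, Complex.ofReal_zero]

lemma tsum_cosCoeff_sq_le {F : (ι → ℝ) → ℝ} (hF : MemLp F 2 (torusMeasure ι)) :
    ∑' v, cosCoeff F v ^ 2 ≤ ∫ ξ, F ξ ^ 2 ∂torusMeasure ι := by
  have hchar (v : ι → ℤ) : MemLp (torusCharacter v) 2 (torusMeasure ι) :=
    memLp_torusMeasure (continuous_torusCharacter v) 2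
  have hre (v : ι → ℤ) :
      (∫ ξ, (F ξ : ℂ) * starRingEnd ℂ (torusCharacter v ξ) ∂torusMeasure ι).re = cosCoeff F v := by
    have hint : Integrable (fun ξ ↦ (F ξ : ℂ) * starRingEnd ℂ (torusCharacter v ξ))
        (torusMeasure ι) := hF.ofReal.integrable_mul (hchar v).star
    refine (integral_re hint).symm.trans (integral_congr_ae (ae_of_all _ fun ξ ↦ ?_))
    simp only [torusCharacter, RCLike.re_to_complex, Complex.re_ofReal_mul, Complex.conj_re,
      Complex.exp_ofReal_mul_I_re]
  refine Real.tsum_le_of_sum_le (fun _ ↦ sq_nonneg _) fun s ↦ ?_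
  calc ∑ v ∈ s, cosCoeff F v ^ 2
      ≤ ∑ v ∈ s, ‖∫ ξ, (F ξ : ℂ) * starRingEnd ℂ (torusCharacter v ξ) ∂torusMeasure ι‖ ^ 2 := by
        refine Finset.sum_le_sum fun v _ ↦ sq_le_sq.2 ?_
        rw [← hre v, abs_of_nonneg (norm_nonneg _)]
        exact Complex.abs_re_le_norm _
    _ ≤ ∫ ξ, ‖(F ξ : ℂ)‖ ^ 2 ∂torusMeasure ι :=
        sum_norm_sq_integral_conj_mul_le hchar integral_torusCharacter_mul_conj hF.ofReal s
    _ = ∫ ξ, F ξ ^ 2 ∂torusMeasure ι := by simp only [Complex.norm_real, norm_eq_abs, sq_abs]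

end TorusFourier

section SincFilter

open Module

variable {ι : Type*} [Fintype ι]

lemma setIntegral_closedBall_euclideanSpace {F : Type*} [NormedAddCommGroup F] [NormedSpace ℝ F]
    (f : (ι → ℝ) → F) {r : ℝ} (hr : 0 ≤ r) :
    ∫ x in Metric.closedBall (0 : EuclideanSpace ℝ ι) r, f x.ofLp
      = ∫ w in {w : ι → ℝ | w ⬝ᵥ w ≤ r ^ 2}, f w := by
  have hball : Metric.closedBall (0 : EuclideanSpace ℝ ι) r
      = WithLp.ofLp ⁻¹' {w : ι → ℝ | w ⬝ᵥ w ≤ r ^ 2} := by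
    ext x
    simp only [mem_closedBall_zero_iff, Set.mem_preimage, Set.mem_ofPred_eq, dotProduct, ← sq,
      ← EuclideanSpace.real_norm_sq_eq, pow_le_pow_iff_left₀ (norm_nonneg x) hr two_ne_zero]
  rw [hball]
  exact (PiLp.volume_preserving_ofLp ι).setIntegral_preimage_emb
    (MeasurableEquiv.toLp 2 _).symm.measurableEmbedding f _

lemma prod_sin_div_ae_eq_prod_sinc (a : ι → ℝ) :
    (fun y : ι → ℝ ↦ ∏ i, sin (π * (a i - y i)) / (π * (a i - y i)))
      =ᵐ[volume] fun y ↦ ∏ i, sinc (π * (a i - y i)) := by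
  have hne (i : ι) : ∀ᵐ (y : ι → ℝ), y i ≠ a i := by
    simpa only [ae_iff, not_not, volume_pi] using
      Measure.pi_hyperplane (fun _ : ι ↦ (volume : Measure ℝ)) i (a i)
  filter_upwards [ae_all_iff.2 hne] with y hy
  exact Finset.prod_congr rfl fun i _ ↦
    (sinc_of_ne_zero (mul_ne_zero pi_ne_zero (sub_ne_zero.2 (hy i).symm))).symm

lemma setIntegral_prod_sinc {s : Set (ι → ℝ)} (hs : volume s ≠ ⊤) (a : ι → ℝ) :
    ∫ y in s, ∏ i, sinc (π * (a i - y i))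
      = ∫ ξ, (∫ y in s, cos (ξ ⬝ᵥ a - ξ ⬝ᵥ y)) ∂torusMeasure ι := by
  have : IsFiniteMeasure (volume.restrict s) := ⟨by simpa using hs.lt_top⟩
  have hcos (y : ι → ℝ) : ∏ i, sinc (π * (a i - y i))
      = ∫ ξ, cos (ξ ⬝ᵥ a - ξ ⬝ᵥ y) ∂torusMeasure ι := by
    simp only [← dotProduct_sub, integral_cos_torusMeasure, Pi.sub_apply]
  simp only [hcos]
  refine integral_integral_swap (μ := volume.restrict s) (ν := torusMeasure ι)
    (f := fun y ξ ↦ cos (ξ ⬝ᵥ a - ξ ⬝ᵥ y))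
    (.of_bound (C := 1) (Continuous.aestronglyMeasurable ?_) (ae_of_all _ fun _ ↦ abs_cos_le_one _))
  unfold Function.uncurry dotProduct
  fun_prop

lemma measurableSet_ellipsoid (M : Matrix ι ι ℝ) (r : ℝ) :
    MeasurableSet {y : ι → ℝ | y ⬝ᵥ (M *ᵥ y) ≤ r} :=
  measurableSet_le (by unfold mulVec dotProduct; fun_prop) measurable_const

open scoped MatrixOrder Matrix.Norms.L2Operator in
lemma exists_eq_mul_transpose {Q : Matrix ι ι ℝ} (hQ : Q.PosSemidef) :
    ∃ A : Matrix ι ι ℝ, Q = A * Aᵀ := by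
  classical
  obtain ⟨B, hB⟩ := CStarAlgebra.nonneg_iff_eq_star_mul_self.1 hQ.nonneg
  exact ⟨Bᵀ, by rw [hB, star_eq_conjTranspose, conjTranspose_eq_transpose_of_trivial,
    transpose_transpose]⟩

/-- The Fourier transform at time `1` of the fundamental solution of the Euler–Poisson–Darboux
equation with covariance matrix `Q`; at time `t` the transform is its value at `t • ξ`. It is a
Bessel function of the first kind in `√⟨ξ, Q ξ⟩`, normalised to be `1` at `ξ = 0`. -/
def epdFourierTransform (Q : Matrix ι ι ℝ) (ξ : ι → ℝ) : ℝ :=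
  confluentHypergeometricLimit (Fintype.card ι / 2 + 1) (-(ξ ⬝ᵥ (Q *ᵥ ξ) / 4))

variable [DecidableEq ι]

lemma setIntegral_image_mulVec {F : Type*} [NormedAddCommGroup F] [NormedSpace ℝ F]
    {A : Matrix ι ι ℝ} (hA : A.det ≠ 0) {s : Set (ι → ℝ)} (hs : MeasurableSet s)
    (f : (ι → ℝ) → F) :
    ∫ y in A.mulVec '' s, f y = |A.det| • ∫ w in s, f (A *ᵥ w) := by
  have hderiv (w : ι → ℝ) :
      HasFDerivWithinAt A.mulVec (LinearMap.toContinuousLinearMap (Matrix.toLin' A)) s w :=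
    (LinearMap.toContinuousLinearMap (Matrix.toLin' A)).hasFDerivWithinAt
  have hinj : Function.Injective A.mulVec :=
    Matrix.mulVec_injective_iff_isUnit.2 ((Matrix.isUnit_iff_isUnit_det A).2 hA.isUnit)
  rw [integral_image_eq_integral_abs_det_fderiv_smul volume hs (fun w _ ↦ hderiv w)
    hinj.injOn f, ← integral_smul]
  simp only [ContinuousLinearMap.det, LinearMap.coe_toContinuousLinearMap, LinearMap.det_toLin']

lemma dotProduct_inv_mul_transpose_mulVec (A : Matrix ι ι ℝ) (y : ι → ℝ) :
    y ⬝ᵥ ((A * Aᵀ)⁻¹ *ᵥ y) = (A⁻¹ *ᵥ y) ⬝ᵥ (A⁻¹ *ᵥ y) := by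
  rw [Matrix.mul_inv_rev, ← Matrix.mulVec_mulVec, ← Matrix.transpose_nonsing_inv,
    Matrix.dotProduct_mulVec, Matrix.vecMul_transpose]

lemma ellipsoid_eq_image_mulVec {A : Matrix ι ι ℝ} (hA : A.det ≠ 0) :
    {y | y ⬝ᵥ ((A * Aᵀ)⁻¹ *ᵥ y) ≤ 1} = A.mulVec '' {w | w ⬝ᵥ w ≤ 1} := by
  rw [Set.image_eq_preimage_of_inverse (g := A⁻¹.mulVec)
    (fun w ↦ by rw [Matrix.mulVec_mulVec, Matrix.nonsing_inv_mul A hA.isUnit, Matrix.one_mulVec])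
    (fun y ↦ by rw [Matrix.mulVec_mulVec, Matrix.mul_nonsing_inv A hA.isUnit, Matrix.one_mulVec])]
  simp only [dotProduct_inv_mul_transpose_mulVec, Set.preimage_ofPred_eq]

lemma setIntegral_ellipsoid_cos [Nonempty ι] {Q : Matrix ι ι ℝ} (hQ : Q.PosDef) (ξ : ι → ℝ)
    (a : ℝ) :
    ∫ y in {y | y ⬝ᵥ (Q⁻¹ *ᵥ y) ≤ 1}, cos (a - ξ ⬝ᵥ y) =
      π ^ (Fintype.card ι / 2 : ℝ) / Gamma (Fintype.card ι / 2 + 1) * √Q.det *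
        epdFourierTransform Q ξ * cos a := by
  obtain ⟨A, rfl⟩ := exists_eq_mul_transpose hQ.posSemidef
  have hdet : (A * Aᵀ).det = A.det ^ 2 := by rw [det_mul, det_transpose, sq]
  have hA : A.det ≠ 0 := fun h ↦ hQ.det_pos.ne' (by rw [hdet, h, zero_pow two_ne_zero])
  have hnorm : ‖WithLp.toLp 2 (Aᵀ *ᵥ ξ)‖ ^ 2 = ξ ⬝ᵥ ((A * Aᵀ) *ᵥ ξ) := by
    rw [EuclideanSpace.real_norm_sq_eq, ← Matrix.mulVec_mulVec, Matrix.dotProduct_mulVec,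
      ← Matrix.mulVec_transpose]
    simp only [dotProduct, sq]
  have hinner (x : EuclideanSpace ℝ ι) :
      ξ ⬝ᵥ (A *ᵥ x.ofLp) = inner ℝ (WithLp.toLp 2 (Aᵀ *ᵥ ξ)) x := by
    rw [EuclideanSpace.inner_eq_star_dotProduct, Matrix.dotProduct_mulVec,
      ← Matrix.mulVec_transpose, star_trivial, dotProduct_comm]
  have hball := setIntegral_closedBall_euclideanSpace (fun w ↦ cos (a - ξ ⬝ᵥ (A *ᵥ w)))
    zero_le_one
  rw [one_pow] at hball
  rw [ellipsoid_eq_image_mulVec hA, setIntegral_image_mulVec hA, ← hball]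
  · simp only [hinner]
    rw [setIntegral_closedBall_cos_sub_inner, setIntegral_closedBall_cos_inner, hnorm,
      finrank_euclideanSpace, hdet, epdFourierTransform, sqrt_sq_eq_abs, smul_eq_mul]
    ring
  · exact measurableSet_le (by unfold dotProduct; fun_prop) measurable_const

lemma volume_ellipsoid_ne_top {Q : Matrix ι ι ℝ} (hQ : Q.PosDef) :
    volume {y | y ⬝ᵥ (Q⁻¹ *ᵥ y) ≤ 1} ≠ ⊤ := by
  obtain ⟨A, rfl⟩ := exists_eq_mul_transpose hQ.posSemidef
  have hA : A.det ≠ 0 := fun h ↦ hQ.det_pos.ne' (by rw [det_mul, h, zero_mul])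
  have hball : {w : ι → ℝ | w ⬝ᵥ w ≤ 1} ⊆ Metric.closedBall 0 1 := fun w hw ↦ by
    refine mem_closedBall_zero_iff.2 ((pi_norm_le_iff_of_nonneg zero_le_one).2 fun i ↦ ?_)
    refine abs_le_one_iff_mul_self_le_one.2 (le_trans ?_ hw)
    exact Finset.single_le_sum (f := fun j ↦ w j * w j) (fun j _ ↦ mul_self_nonneg _)
      (Finset.mem_univ i)
  rw [ellipsoid_eq_image_mulVec hA]
  have hcompact := (isCompact_closedBall (0 : ι → ℝ) 1).image (f := A.mulVec) (by fun_prop)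
  exact measure_ne_top_of_subset (Set.image_mono hball) hcompact.measure_lt_top.ne

lemma setIntegral_ellipsoid_prod_sinc [Nonempty ι] {Q : Matrix ι ι ℝ} (hQ : Q.PosDef)
    (v : ι → ℤ) :
    ∫ y in {y | y ⬝ᵥ (Q⁻¹ *ᵥ y) ≤ 1}, ∏ i, sinc (π * (v i - y i)) =
      π ^ (Fintype.card ι / 2 : ℝ) / Gamma (Fintype.card ι / 2 + 1) * √Q.det *
        cosCoeff (epdFourierTransform Q) v := by
  rw [setIntegral_prod_sinc (volume_ellipsoid_ne_top hQ), cosCoeff, ← integral_const_mul]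
  simp only [setIntegral_ellipsoid_cos hQ, latticePairing, mul_assoc]

/-- The fundamental solution `u(t, y)` of the Euler–Poisson–Darboux equation with covariance
matrix `Q`: the uniform probability density of the ellipsoid `⟨y, Q⁻¹ y⟩ ≤ t²`. -/
def epdFundamentalSolution (Q : Matrix ι ι ℝ) (t : ℝ) (y : ι → ℝ) : ℝ :=
  Gamma (Fintype.card ι / 2 + 1) / (π ^ (Fintype.card ι / 2 : ℝ) * √Q.det * t ^ Fintype.card ι) *
    if y ⬝ᵥ (Q⁻¹ *ᵥ y) ≤ t ^ 2 then 1 else 0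

/-- The convolution `(u(t, ·) ∗ ψ)(a)` of the Euler–Poisson–Darboux fundamental solution with the
low-pass filter `ψ(y) = ∏ᵢ sin (π yᵢ) / (π yᵢ)`. The quotient takes the junk value `0` on the null
set `yᵢ = 0`, which the integral does not see. -/
def sincFilteredSolution (Q : Matrix ι ι ℝ) (t : ℝ) (a : ι → ℝ) : ℝ :=
  ∫ y, epdFundamentalSolution Q t y * ∏ i, sin (π * (a i - y i)) / (π * (a i - y i))

theorem sincFilteredSolution_intCast [Nonempty ι] {Q : Matrix ι ι ℝ} (hQ : Q.PosDef) {t : ℝ}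
    (ht : 0 < t) (v : ι → ℤ) :
    sincFilteredSolution Q t (fun i ↦ v i) =
      cosCoeff (fun ξ ↦ epdFourierTransform Q (t • ξ)) v := by
  set c := Gamma (Fintype.card ι / 2 + 1) /
    (π ^ (Fintype.card ι / 2 : ℝ) * √Q.det * t ^ Fintype.card ι)
  have ht2 : 0 < t ^ 2 := by positivity
  have hscaled : (t ^ 2 • Q).PosDef := hQ.smul ht2
  have hellipsoid : {y | y ⬝ᵥ (Q⁻¹ *ᵥ y) ≤ t ^ 2} = {y | y ⬝ᵥ ((t ^ 2 • Q)⁻¹ *ᵥ y) ≤ 1} := by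
    ext y
    have := invertibleOfNonzero ht2.ne'
    rw [Set.mem_ofPred_eq, Set.mem_ofPred_eq, Matrix.inv_smul Q (t ^ 2) hQ.det_pos.ne'.isUnit,
      invOf_eq_inv, Matrix.smul_mulVec, dotProduct_smul, smul_eq_mul, inv_mul_le_iff₀ ht2, mul_one]
  have hdet : √(t ^ 2 • Q).det = t ^ Fintype.card ι * √Q.det := by
    rw [det_smul, ← pow_mul, mul_comm 2, pow_mul, sqrt_mul (by positivity), sqrt_sq (by positivity)]
  have htransform : epdFourierTransform (t ^ 2 • Q) = fun ξ ↦ epdFourierTransform Q (t • ξ) := by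
    funext ξ
    simp only [epdFourierTransform, smul_mulVec, mulVec_smul, dotProduct_smul, smul_dotProduct,
      smul_eq_mul, sq, mul_assoc]
  calc
    _ = ∫ y, c * {y | y ⬝ᵥ (Q⁻¹ *ᵥ y) ≤ t ^ 2}.indicator
          (fun y ↦ ∏ i, sinc (π * (v i - y i))) y := by
      refine integral_congr_ae ?_
      filter_upwards [prod_sin_div_ae_eq_prod_sinc fun i ↦ (v i : ℝ)] with y hy
      simp only [hy, epdFundamentalSolution, Set.indicator_apply, Set.mem_ofPred_eq, c, mul_assoc,
        ite_mul, one_mul, zero_mul]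
    _ = c * (π ^ (Fintype.card ι / 2 : ℝ) / Gamma (Fintype.card ι / 2 + 1) *
          (t ^ Fintype.card ι * √Q.det)) * cosCoeff (fun ξ ↦ epdFourierTransform Q (t • ξ)) v := by
      rw [integral_const_mul, integral_indicator (measurableSet_ellipsoid _ _), hellipsoid,
        setIntegral_ellipsoid_prod_sinc hscaled, hdet, htransform,
        mul_assoc c]
    _ = _ := by
      have : Gamma (Fintype.card ι / 2 + 1 : ℝ) ≠ 0 := (Gamma_pos_of_pos (by positivity)).ne'
      have : √Q.det ≠ 0 := (sqrt_pos.2 hQ.det_pos).ne'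
      have : π ^ (Fintype.card ι / 2 : ℝ) ≠ 0 := (rpow_pos_of_pos pi_pos _).ne'
      simp only [c]
      field_simp

end SincFilter

section WalkSymbol

variable {d : ℕ} {ω : (Fin d → ℤ) → ℝ}

lemma tsum_mul_eq_sum_toFinset (hfin : ω.support.Finite) (f : (Fin d → ℤ) → ℝ) :
    ∑' v, ω v * f v = ∑ v ∈ hfin.toFinset, ω v * f v :=
  tsum_eq_sum fun v hv ↦ by rw [Set.Finite.mem_toFinset, Function.notMem_support] at hv; simp [hv]

lemma re_ftOmega (hfin : ω.support.Finite) (ξ : Fin d → ℝ) :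
    (ftOmega ω ξ).re = ∑ v ∈ hfin.toFinset, ω v * cos (latticePairing ξ v) := by
  have hexp (v : Fin d → ℤ) :
      ((ω v : ℂ) * Complex.exp (Complex.I * ((∑ i, ξ i * (v i : ℝ) : ℝ) : ℂ))).re
        = ω v * cos (latticePairing ξ v) := by
    rw [Complex.re_ofReal_mul, mul_comm Complex.I, Complex.exp_ofReal_mul_I_re]; rfl
  rw [ftOmega, tsum_eq_sum (s := hfin.toFinset), Complex.re_sum, Finset.sum_congr rfl
    fun v _ ↦ hexp v]
  intro v hv
  rw [Set.Finite.mem_toFinset, Function.notMem_support] at hv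
  rw [hv, Complex.ofReal_zero, zero_mul]

lemma sum_mul_sin_latticePairing (hfin : ω.support.Finite) (hsymm : ∀ v, ω (-v) = ω v)
    (ξ : Fin d → ℝ) : ∑ v ∈ hfin.toFinset, ω v * sin (latticePairing ξ v) = 0 := by
  rw [← tsum_mul_eq_sum_toFinset hfin]
  have hneg := (Equiv.neg (Fin d → ℤ)).tsum_eq fun v ↦ ω v * sin (latticePairing ξ v)
  simp only [Equiv.neg_apply, hsymm, latticePairing_neg, sin_neg, mul_neg, tsum_neg] at hneg
  exact self_eq_neg.1 hneg.symm

lemma sum_mul_cos_latticePairing_sub (hfin : ω.support.Finite) (hsymm : ∀ v, ω (-v) = ω v)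
    (ξ : Fin d → ℝ) (v : Fin d → ℤ) :
    ∑ w ∈ hfin.toFinset, ω w * cos (latticePairing ξ (v - w))
      = (ftOmega ω ξ).re * cos (latticePairing ξ v) :=
  calc
    _ = (∑ w ∈ hfin.toFinset, ω w * cos (latticePairing ξ w)) * cos (latticePairing ξ v) +
        (∑ w ∈ hfin.toFinset, ω w * sin (latticePairing ξ w)) * sin (latticePairing ξ v) := by
      rw [Finset.sum_mul, Finset.sum_mul, ← Finset.sum_add_distrib]
      refine Finset.sum_congr rfl fun w _ ↦ ?_
      rw [latticePairing_sub, cos_sub]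
      ring
    _ = _ := by rw [sum_mul_sin_latticePairing hfin hsymm, ← re_ftOmega, zero_mul, add_zero]

lemma latticeConv_cosCoeff (hfin : ω.support.Finite) (hsymm : ∀ v, ω (-v) = ω v)
    {F : (Fin d → ℝ) → ℝ} (hF : Integrable F (torusMeasure (Fin d))) (v : Fin d → ℤ) :
    latticeConv ω (cosCoeff F) v = cosCoeff (fun ξ ↦ (ftOmega ω ξ).re * F ξ) v :=
  calc
    _ = ∑' w, ω w * cosCoeff F (v - w) := by
      rw [latticeConv, ← (Equiv.subLeft v).tsum_eq]
      simp only [Equiv.subLeft_apply, sub_sub_cancel]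
    _ = ∑ w ∈ hfin.toFinset, ∫ ξ, ω w * (F ξ * cos (latticePairing ξ (v - w)))
          ∂torusMeasure (Fin d) := by
      simp only [tsum_mul_eq_sum_toFinset hfin, cosCoeff, integral_const_mul]
    _ = ∫ ξ, ∑ w ∈ hfin.toFinset, ω w * (F ξ * cos (latticePairing ξ (v - w)))
          ∂torusMeasure (Fin d) :=
      (integral_finsetSum _ fun w _ ↦
        (integrable_mul_cos_latticePairing hF _).const_mul (ω w)).symm
    _ = _ := by
      simp only [mul_left_comm (ω _), ← Finset.mul_sum,
        sum_mul_cos_latticePairing_sub hfin hsymm, cosCoeff]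
      simp only [mul_left_comm, mul_assoc]

/-- The symbol `(1 - Re ω̂) / 2` of the operator `(1 - ω ∗ ·) / 2`, for symmetric `ω`. In this
variable the Jacobi polynomials are expanded around the endpoint `ω̂ = 1`. -/
def symbolDefect (ω : (Fin d → ℤ) → ℝ) (ξ : Fin d → ℝ) : ℝ := (1 - (ftOmega ω ξ).re) / 2

lemma one_sub_two_mul_symbolDefect (ξ : Fin d → ℝ) :
    1 - 2 * symbolDefect ω ξ = (ftOmega ω ξ).re := by
  rw [symbolDefect]
  ring

lemma continuous_re_ftOmega (hfin : ω.support.Finite) : Continuous fun ξ ↦ (ftOmega ω ξ).re := by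
  simp only [re_ftOmega hfin]
  fun_prop

lemma continuous_symbolDefect (hfin : ω.support.Finite) : Continuous (symbolDefect ω) :=
  (continuous_const.sub (continuous_re_ftOmega hfin)).div_const 2

lemma continuous_shiftedJacobi_symbolDefect (hfin : ω.support.Finite) (α β : ℝ) (n : ℕ) :
    Continuous fun ξ ↦ (shiftedJacobi α β n).eval (symbolDefect ω ξ) :=
  (shiftedJacobi α β n).continuous.comp (continuous_symbolDefect hfin)

theorem jacobi_iteration_eq_cosCoeff (hfin : ω.support.Finite)
    (hsymm : ∀ v, ω (-v) = ω v) {x : ℕ → (Fin d → ℤ) → ℝ}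
    (hx0 : ∀ v, x 0 v = if v = 0 then 1 else 0)
    (hx1 : ∀ v, x 1 v = aCoef0 d * latticeConv ω (x 0) v + bCoef0 d * x 0 v)
    (hrec : ∀ n, 1 ≤ n → ∀ v, x (n + 1) v =
      aCoef d n * latticeConv ω (x n) v + bCoef d n * x n v - cCoef d n * x (n - 1) v) (n : ℕ) :
    x n = cosCoeff fun ξ ↦ (shiftedJacobi (d / 2) 0 n).eval (symbolDefect ω ξ) := by
  set P : ℕ → (Fin d → ℝ) → ℝ := fun n ξ ↦ (shiftedJacobi (d / 2) 0 n).eval (symbolDefect ω ξ)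
  have hP (n : ℕ) (a : ℝ) : Integrable (fun ξ ↦ a * P n ξ) (torusMeasure (Fin d)) :=
    (integrable_torusMeasure
      (continuous_shiftedJacobi_symbolDefect hfin (d / 2) 0 n)).const_mul a
  have hωP (n : ℕ) (a : ℝ) :
      Integrable (fun ξ ↦ a * ((ftOmega ω ξ).re * P n ξ)) (torusMeasure (Fin d)) :=
    (integrable_torusMeasure ((continuous_re_ftOmega hfin).mul
      (continuous_shiftedJacobi_symbolDefect hfin (d / 2) 0 n))).const_mul a
  have hconv (n : ℕ) (v : Fin d → ℤ) :
      latticeConv ω (cosCoeff (P n)) v = cosCoeff (fun ξ ↦ (ftOmega ω ξ).re * P n ξ) v :=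
    latticeConv_cosCoeff hfin hsymm (by simpa only [one_mul] using hP n 1) v
  have hzero : x 0 = cosCoeff (P 0) := by
    funext v
    simp only [P, shiftedJacobi_zero, Polynomial.eval_one, cosCoeff_one, hx0]
  change x n = cosCoeff (P n)
  induction n using Nat.twoStepInduction with
  | zero => exact hzero
  | one =>
    funext v
    rw [hx1, hzero, hconv, ← cosCoeff_const_mul, ← cosCoeff_const_mul,
      ← cosCoeff_add (hωP 0 _) (hP 0 _)]
    simp only [P, shiftedJacobi_zero, shiftedJacobi_one_eval_eq_coef, Polynomial.eval_one, mul_one,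
      one_sub_two_mul_symbolDefect]
  | more n ih ih' =>
    funext v
    rw [hrec (n + 1) (by lia), ih', hconv, Nat.add_sub_cancel, ih]
    simp only [← cosCoeff_const_mul]
    rw [← cosCoeff_add (hωP _ _) (hP _ _), ← cosCoeff_sub ((hωP _ _).fun_add (hP _ _)) (hP _ _)]
    simp only [P, shiftedJacobi_recurrence_coef, one_sub_two_mul_symbolDefect]

end WalkSymbol

section SymbolAsymptotics

lemma exists_pos_mul_le_of_eventually_nhds {X : Type*} [TopologicalSpace X] {K : Set X}
    (hK : IsCompact K) {f g : X → ℝ} (hf : ContinuousOn f K) (hg : ContinuousOn g K)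
    (hg₀ : ∀ x ∈ K, 0 ≤ g x) {x₀ : X} (hpos : ∀ x ∈ K, x ≠ x₀ → 0 < f x) {c : ℝ} (hc : 0 < c)
    (hle : ∀ᶠ x in 𝓝 x₀, c * g x ≤ f x) :
    ∃ c' > 0, ∀ x ∈ K, c' * g x ≤ f x := by
  obtain ⟨U, hU, hUo, hxU⟩ := eventually_nhds_iff.1 hle
  obtain ⟨m, hm, hfm⟩ := (hK.diff hUo).exists_forall_le' (hf.mono Set.sdiff_subset)
    fun x hx ↦ hpos x hx.1 fun h ↦ hx.2 (h ▸ hxU)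
  obtain ⟨M, hM⟩ := hK.bddAbove_image hg
  have hgM (x : X) (hx : x ∈ K) : g x ≤ |M| + 1 :=
    (hM (Set.mem_image_of_mem g hx)).trans ((le_abs_self M).trans (lt_add_one _).le)
  refine ⟨min c (m / (|M| + 1)), by positivity, fun x hx ↦ ?_⟩
  by_cases hxU : x ∈ U
  · exact (mul_le_mul_of_nonneg_right (min_le_left _ _) (hg₀ x hx)).trans (hU x hxU)
  · calc
      min c (m / (|M| + 1)) * g x ≤ m / (|M| + 1) * (|M| + 1) :=
        mul_le_mul (min_le_right _ _) (hgM x hx) (hg₀ x hx) (by positivity)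
      _ = m := by field_simp
      _ ≤ f x := hfm x ⟨hx, hxU⟩

lemma continuous_dotProduct_mulVec {ι : Type*} [Fintype ι] (Q : Matrix ι ι ℝ) :
    Continuous fun ξ : ι → ℝ ↦ ξ ⬝ᵥ (Q *ᵥ ξ) := by
  unfold mulVec dotProduct
  fun_prop

lemma continuous_epdFourierTransform {ι : Type*} [Fintype ι] (Q : Matrix ι ι ℝ) :
    Continuous (epdFourierTransform Q) :=
  (continuous_confluentHypergeometricLimit (by positivity)).comp
    ((continuous_dotProduct_mulVec Q).div_const 4).neg

lemma exists_pos_mul_norm_sq_le_dotProduct_mulVec {ι : Type*} [Fintype ι] {Q : Matrix ι ι ℝ}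
    (hQ : Q.PosDef) : ∃ c > 0, ∀ ξ : ι → ℝ, c * ‖ξ‖ ^ 2 ≤ ξ ⬝ᵥ (Q *ᵥ ξ) := by
  obtain ⟨c, hc, hsphere⟩ := (isCompact_sphere (0 : ι → ℝ) 1).exists_forall_le' (a := 0)
    (continuous_dotProduct_mulVec Q).continuousOn fun ξ hξ ↦ by
      simpa using hQ.dotProduct_mulVec_pos (Metric.ne_of_mem_sphere hξ one_ne_zero)
  refine ⟨c, hc, fun ξ ↦ ?_⟩
  obtain rfl | hξ := eq_or_ne ξ 0
  · simp
  have hunit := hsphere (‖ξ‖⁻¹ • ξ) (by simp [norm_smul, hξ])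
  rw [mulVec_smul, smul_dotProduct, dotProduct_smul, smul_eq_mul, smul_eq_mul] at hunit
  have := norm_pos_iff.2 hξ
  field_simp at hunit
  exact hunit

variable {d : ℕ} {ω : (Fin d → ℤ) → ℝ}

lemma dotProduct_covQ_mulVec (hfin : ω.support.Finite) (ξ : Fin d → ℝ) :
    ξ ⬝ᵥ (covQ d ω *ᵥ ξ) = ∑ v ∈ hfin.toFinset, ω v * latticePairing ξ v ^ 2 := by
  have hcov : covQ d ω =
      ∑ v ∈ hfin.toFinset, ω v • vecMulVec (fun i ↦ (v i : ℝ)) (fun i ↦ (v i : ℝ)) := by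
    ext i j
    rw [covQ, of_apply, Matrix.sum_apply]
    simp only [Matrix.smul_apply, vecMulVec_apply, smul_eq_mul, mul_assoc,
      tsum_mul_eq_sum_toFinset hfin]
  rw [hcov, sum_mulVec, dotProduct_sum]
  refine Finset.sum_congr rfl fun v _ ↦ ?_
  rw [smul_mulVec, vecMulVec_mulVec, dotProduct_smul, latticePairing, dotProduct_comm _ ξ]
  simp only [op_smul_eq_smul, dotProduct_smul, smul_eq_mul, sq]

lemma symbolDefect_eq_sum (hfin : ω.support.Finite) (hmass : ∑' v, ω v = 1) (ξ : Fin d → ℝ) :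
    symbolDefect ω ξ = ∑ v ∈ hfin.toFinset, ω v * sin (latticePairing ξ v / 2) ^ 2 := by
  have hmass' : ∑ v ∈ hfin.toFinset, ω v = 1 := by
    simpa only [mul_one, hmass, eq_comm] using tsum_mul_eq_sum_toFinset hfin fun _ ↦ 1
  have hhalf (t : ℝ) : sin (t / 2) ^ 2 = (1 - cos t) / 2 := by
    rw [sin_sq_eq_half_sub, mul_div_cancel₀ _ two_ne_zero]
    ring
  simp only [symbolDefect, re_ftOmega hfin, hhalf, mul_div_assoc', ← Finset.sum_div, mul_sub,
    mul_one, Finset.sum_sub_distrib, hmass']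

lemma symbolDefect_nonneg (hfin : ω.support.Finite) (hnn : ∀ v, 0 ≤ ω v) (hmass : ∑' v, ω v = 1)
    (ξ : Fin d → ℝ) : 0 ≤ symbolDefect ω ξ := by
  rw [symbolDefect_eq_sum hfin hmass]
  exact Finset.sum_nonneg fun v _ ↦ mul_nonneg (hnn v) (sq_nonneg _)

lemma abs_re_ftOmega_lt_one
    (haper : ∀ ξ : Fin d → ℝ, (∀ i, ξ i ∈ Set.Icc (-π) π) → ξ ≠ 0 → ‖ftOmega ω ξ‖ < 1)
    {ξ : Fin d → ℝ} (hξ : ξ ∈ dualCube (Fin d)) (hξ₀ : ξ ≠ 0) : |(ftOmega ω ξ).re| < 1 :=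
  (Complex.abs_re_le_norm _).trans_lt (haper ξ (mem_dualCube.1 hξ) hξ₀)

lemma exists_symbolDefect_le_one_sub (hfin : ω.support.Finite) (hmass : ∑' v, ω v = 1)
    (haper : ∀ ξ : Fin d → ℝ, (∀ i, ξ i ∈ Set.Icc (-π) π) → ξ ≠ 0 → ‖ftOmega ω ξ‖ < 1) :
    ∃ δ > 0, ∀ ξ ∈ dualCube (Fin d), symbolDefect ω ξ ≤ 1 - δ := by
  have hlt (ξ : Fin d → ℝ) (hξ : ξ ∈ dualCube (Fin d)) : 0 < 1 - symbolDefect ω ξ := by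
    obtain rfl | hξ₀ := eq_or_ne ξ 0
    · simp [symbolDefect_eq_sum hfin hmass, latticePairing_zero_left]
    · have := (abs_lt.1 (abs_re_ftOmega_lt_one haper hξ hξ₀)).1
      rw [symbolDefect]
      linarith
  obtain ⟨δ, hδ, h⟩ := isCompact_dualCube.exists_forall_le'
    (continuous_const.sub (continuous_symbolDefect hfin)).continuousOn hlt
  exact ⟨δ, hδ, fun ξ hξ ↦ le_sub_comm.1 (h ξ hξ)⟩

lemma eventually_dotProduct_covQ_div_le_symbolDefect (hfin : ω.support.Finite)
    (hnn : ∀ v, 0 ≤ ω v) (hmass : ∑' v, ω v = 1) :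
    ∀ᶠ ξ : Fin d → ℝ in 𝓝 0, ξ ⬝ᵥ (covQ d ω *ᵥ ξ) / π ^ 2 ≤ symbolDefect ω ξ := by
  have hsmall : ∀ᶠ ξ : Fin d → ℝ in 𝓝 0, ∀ v ∈ hfin.toFinset, |latticePairing ξ v| < π :=
    (Finset.eventually_all _).2 fun v _ ↦
      (continuous_latticePairing v).abs.continuousAt.eventually_lt continuousAt_const
        (by simpa [latticePairing_zero_left] using pi_pos)
  filter_upwards [hsmall] with ξ hξ
  rw [dotProduct_covQ_mulVec hfin, symbolDefect_eq_sum hfin hmass, Finset.sum_div]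
  refine Finset.sum_le_sum fun v hv ↦ ?_
  have hjordan : cos (latticePairing ξ v) ≤ 1 - 2 / π ^ 2 * latticePairing ξ v ^ 2 :=
    cos_le_one_sub_mul_cos_sq (hξ v hv).le
  rw [mul_div_assoc, sin_sq_eq_half_sub, mul_div_cancel₀ _ two_ne_zero]
  refine mul_le_mul_of_nonneg_left ?_ (hnn v)
  linear_combination hjordan / 2

lemma exists_pos_mul_norm_sq_le_symbolDefect (hfin : ω.support.Finite) (hnn : ∀ v, 0 ≤ ω v)
    (hmass : ∑' v, ω v = 1) (hQ : (covQ d ω).PosDef)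
    (haper : ∀ ξ : Fin d → ℝ, (∀ i, ξ i ∈ Set.Icc (-π) π) → ξ ≠ 0 → ‖ftOmega ω ξ‖ < 1) :
    ∃ c > 0, ∀ ξ ∈ dualCube (Fin d), c * ‖ξ‖ ^ 2 ≤ symbolDefect ω ξ := by
  obtain ⟨c, hc, hquad⟩ := exists_pos_mul_norm_sq_le_dotProduct_mulVec hQ
  refine exists_pos_mul_le_of_eventually_nhds isCompact_dualCube (x₀ := 0) (c := c / π ^ 2)
    (continuous_symbolDefect hfin).continuousOn (by fun_prop) (fun ξ _ ↦ by positivity)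
    (fun ξ hξ hξ₀ ↦ ?_) (by positivity) ?_
  · have := (abs_lt.1 (abs_re_ftOmega_lt_one haper hξ hξ₀)).2
    rw [symbolDefect]
    linarith
  · filter_upwards [eventually_dotProduct_covQ_div_le_symbolDefect hfin hnn hmass] with ξ hξ
    refine le_trans ?_ hξ
    rw [div_mul_eq_mul_div]
    gcongr
    exact hquad ξ

lemma tendsto_sq_mul_sin_inv_mul_sq (t : ℝ) :
    Tendsto (fun n : ℕ ↦ (n : ℝ) ^ 2 * sin ((n : ℝ)⁻¹ * t) ^ 2) atTop (𝓝 (t ^ 2)) := by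
  have hsinc : Tendsto (fun n : ℕ ↦ t ^ 2 * sinc ((n : ℝ)⁻¹ * t) ^ 2) atTop
      (𝓝 (t ^ 2 * sinc (0 * t) ^ 2)) :=
    (((continuous_sinc.tendsto _).comp
      (tendsto_inv_atTop_nhds_zero_nat.mul_const t)).pow 2).const_mul _
  rw [zero_mul, sinc_zero, one_pow, mul_one] at hsinc
  refine hsinc.congr' ?_
  filter_upwards [eventually_ne_atTop 0] with n hn
  obtain rfl | ht := eq_or_ne t 0
  · simp
  · rw [sinc_of_ne_zero (by positivity)]
    field_simp

lemma tendsto_sq_mul_symbolDefect (hfin : ω.support.Finite) (hmass : ∑' v, ω v = 1)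
    (η : Fin d → ℝ) :
    Tendsto (fun n : ℕ ↦ (n : ℝ) ^ 2 * symbolDefect ω ((n : ℝ)⁻¹ • η)) atTop
      (𝓝 (η ⬝ᵥ (covQ d ω *ᵥ η) / 4)) := by
  simp only [symbolDefect_eq_sum hfin hmass, dotProduct_covQ_mulVec hfin, latticePairing_smul,
    Finset.mul_sum, Finset.sum_div, mul_left_comm _ (ω _), mul_div_assoc]
  refine tendsto_finsetSum _ fun v _ ↦ Tendsto.const_mul _ ?_
  convert tendsto_sq_mul_sin_inv_mul_sq (latticePairing η v / 2) using 2
  ring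

end SymbolAsymptotics

section ScalingLimit

lemma eventually_inv_natCast_smul_mem {E : Type*} [AddCommGroup E] [Module ℝ E]
    [TopologicalSpace E] [ContinuousSMul ℝ E] {s : Set E} (hs : s ∈ 𝓝 0) (η : E) :
    ∀ᶠ n : ℕ in atTop, (n : ℝ)⁻¹ • η ∈ s := by
  have h : Tendsto (fun n : ℕ ↦ (n : ℝ)⁻¹ • η) atTop (𝓝 ((0 : ℝ) • η)) :=
    tendsto_inv_atTop_nhds_zero_nat.smul_const η
  exact (zero_smul ℝ η ▸ h).eventually_mem hs

variable {E : Type*} [NormedAddCommGroup E] [NormedSpace ℝ E] [FiniteDimensional ℝ E]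
  [MeasurableSpace E] [BorelSpace E] {μ : Measure E} [μ.IsAddHaarMeasure] {s : Set E}

lemma tendsto_pow_finrank_mul_setIntegral (hs : MeasurableSet s) (hs₀ : s ∈ 𝓝 0)
    {f : ℕ → E → ℝ} (hf : ∀ n, Measurable (f n)) {g : E → ℝ} (hg : Integrable g μ)
    (hg₀ : ∀ η, 0 ≤ g η)
    (hfg : ∀ᶠ n : ℕ in atTop, ∀ η, (n : ℝ)⁻¹ • η ∈ s → |f n ((n : ℝ)⁻¹ • η)| ≤ g η)
    {F : E → ℝ} (hlim : ∀ η, Tendsto (fun n : ℕ ↦ f n ((n : ℝ)⁻¹ • η)) atTop (𝓝 (F η))) :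
    Tendsto (fun n : ℕ ↦ (n : ℝ) ^ Module.finrank ℝ E * ∫ ξ in s, f n ξ ∂μ) atTop
      (𝓝 (∫ η, F η ∂μ)) := by
  have hrescale (n : ℕ) : (n : ℝ) ^ Module.finrank ℝ E * ∫ ξ in s, f n ξ ∂μ
      = ∫ η, s.indicator (f n) ((n : ℝ)⁻¹ • η) ∂μ := by
    rw [Measure.integral_comp_inv_smul_of_nonneg μ _ n.cast_nonneg, integral_indicator hs,
      smul_eq_mul]
  simp only [hrescale]
  refine tendsto_integral_filter_of_dominated_convergence g (.of_forall fun n ↦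
    (((hf n).indicator hs).comp (measurable_const_smul _)).aestronglyMeasurable) ?_ hg
    (ae_of_all _ fun η ↦ (hlim η).congr' ?_)
  · filter_upwards [hfg] with n hn
    refine ae_of_all _ fun η ↦ ?_
    by_cases hη : (n : ℝ)⁻¹ • η ∈ s
    · rw [Set.indicator_of_mem hη]
      exact hn η hη
    · rw [Set.indicator_of_notMem hη, norm_zero]
      exact hg₀ η
  · filter_upwards [eventually_inv_natCast_smul_mem hs₀ η] with n hn
    rw [Set.indicator_of_mem hn]

lemma tendsto_pow_finrank_mul_setIntegral_sub_sq (hs : MeasurableSet s) (hs₀ : s ∈ 𝓝 0)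
    {f : ℕ → E → ℝ} (hf : ∀ n, Measurable (f n)) {F : E → ℝ} (hF : Measurable F) {g : E → ℝ}
    (hg : Integrable g μ)
    (hfg : ∀ᶠ n : ℕ in atTop, ∀ ξ ∈ s, f n ξ ^ 2 ≤ g ((n : ℝ) • ξ))
    (hlim : ∀ η, Tendsto (fun n : ℕ ↦ f n ((n : ℝ)⁻¹ • η)) atTop (𝓝 (F η))) :
    Tendsto (fun n : ℕ ↦
      (n : ℝ) ^ Module.finrank ℝ E * ∫ ξ in s, (f n ξ - F ((n : ℝ) • ξ)) ^ 2 ∂μ) atTop (𝓝 0) := by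
  have hfg' : ∀ᶠ n : ℕ in atTop, ∀ η, (n : ℝ) • (n : ℝ)⁻¹ • η = η ∧
      ((n : ℝ)⁻¹ • η ∈ s → f n ((n : ℝ)⁻¹ • η) ^ 2 ≤ g η) := by
    filter_upwards [hfg, eventually_ne_atTop 0] with n hn hn₀ η
    have hcancel : (n : ℝ) • (n : ℝ)⁻¹ • η = η := smul_inv_smul₀ (Nat.cast_ne_zero.2 hn₀) η
    exact ⟨hcancel, fun hη ↦ by simpa only [hcancel] using hn _ hη⟩
  have hFg (η : E) : F η ^ 2 ≤ g η := by
    refine le_of_tendsto ((hlim η).pow 2) ?_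
    filter_upwards [hfg', eventually_inv_natCast_smul_mem hs₀ η] with n hn hη
    exact (hn η).2 hη
  have hzero := tendsto_pow_finrank_mul_setIntegral (μ := μ) hs hs₀ (F := 0)
    (f := fun n ξ ↦ (f n ξ - F ((n : ℝ) • ξ)) ^ 2) (g := fun η ↦ 4 * g η)
    (fun n ↦ ((hf n).sub (hF.comp (measurable_const_smul _))).pow_const 2) (hg.const_mul 4)
    (fun η ↦ mul_nonneg zero_le_four ((sq_nonneg _).trans (hFg η))) ?_ fun η ↦ ?_
  · simpa only [Pi.zero_apply, integral_zero] using hzero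
  · filter_upwards [hfg'] with n hn η hη
    rw [(hn η).1, abs_of_nonneg (sq_nonneg _)]
    linarith [add_sq_le (a := f n ((n : ℝ)⁻¹ • η)) (b := -F η), (hn η).2 hη, hFg η, neg_sq (F η)]
  · have hsq := ((hlim η).sub_const (F η)).pow 2
    rw [sub_self, zero_pow two_ne_zero] at hsq
    refine hsq.congr' ?_
    filter_upwards [hfg'] with n hn
    rw [(hn η).1]

variable {d : ℕ} {ω : (Fin d → ℤ) → ℝ}

lemma exists_sq_shiftedJacobi_symbolDefect_le (hfin : ω.support.Finite) (hnn : ∀ v, 0 ≤ ω v)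
    (hmass : ∑' v, ω v = 1) (hQ : (covQ d ω).PosDef)
    (haper : ∀ ξ : Fin d → ℝ, (∀ i, ξ i ∈ Set.Icc (-π) π) → ξ ≠ 0 → ‖ftOmega ω ξ‖ < 1)
    {α β : ℝ} (hα : 1 / 2 ≤ α) (hβ : |β| ≤ 1 / 2) :
    ∃ C, ∀ n : ℕ, 8 * α ≤ n → ∀ ξ ∈ dualCube (Fin d),
      (shiftedJacobi α β n).eval (symbolDefect ω ξ) ^ 2
        ≤ C * (1 + ‖(n : ℝ) • ξ‖) ^ (-(2 * α + 1)) := by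
  obtain ⟨δ, hδ, hupper⟩ := exists_symbolDefect_le_one_sub hfin hmass haper
  obtain ⟨c, hc, hlower⟩ := exists_pos_mul_norm_sq_le_symbolDefect hfin hnn hmass hQ haper
  obtain ⟨C, hC⟩ := exists_sq_shiftedJacobi_le hα hβ hδ
  set m := min 1 √c
  have hm : 0 < m := lt_min one_pos (sqrt_pos.2 hc)
  refine ⟨C / m ^ (2 * α + 1), fun n hn ξ hξ ↦ ?_⟩
  have hbase : m * (1 + ‖(n : ℝ) • ξ‖) ≤ 1 + n * √(symbolDefect ω ξ) := by
    have hsqrt : √c * ‖ξ‖ ≤ √(symbolDefect ω ξ) := by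
      rw [← sqrt_sq (norm_nonneg ξ), ← sqrt_mul hc.le]
      exact sqrt_le_sqrt (hlower ξ hξ)
    rw [norm_smul, norm_natCast]
    calc
      m * (1 + n * ‖ξ‖) = m + n * (m * ‖ξ‖) := by ring
      _ ≤ 1 + n * (√c * ‖ξ‖) := by
        gcongr
        exacts [min_le_left _ _, min_le_right _ _]
      _ ≤ 1 + n * √(symbolDefect ω ξ) := by gcongr
  have hdecay : (m * (1 + ‖(n : ℝ) • ξ‖)) ^ (2 * α + 1) *
      (shiftedJacobi α β n).eval (symbolDefect ω ξ) ^ 2 ≤ C :=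
    le_trans (by gcongr)
      (hC n hn _ ⟨symbolDefect_nonneg hfin hnn hmass ξ, hupper ξ hξ⟩)
  rw [mul_rpow hm.le (by positivity)] at hdecay
  rw [rpow_neg (by positivity), div_mul_eq_mul_div, ← div_eq_mul_inv, div_div,
    le_div_iff₀ (by positivity)]
  linarith

lemma tendsto_shiftedJacobi_symbolDefect (hfin : ω.support.Finite) (hnn : ∀ v, 0 ≤ ω v)
    (hmass : ∑' v, ω v = 1) (β : ℝ) (η : Fin d → ℝ) :
    Tendsto (fun n : ℕ ↦
        (shiftedJacobi (d / 2) β n).eval (symbolDefect ω ((n : ℝ)⁻¹ • η))) atTop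
      (𝓝 (epdFourierTransform (covQ d ω) η)) := by
  rw [epdFourierTransform, Fintype.card_fin]
  exact tendsto_shiftedJacobi_eval (by linarith [d.cast_nonneg (α := ℝ)]) β
    (fun n ↦ symbolDefect_nonneg hfin hnn hmass _) (tendsto_sq_mul_symbolDefect hfin hmass η)

theorem tendsto_pow_mul_integral_shiftedJacobi_sub_sq (hd : 1 ≤ d) (hfin : ω.support.Finite)
    (hnn : ∀ v, 0 ≤ ω v) (hmass : ∑' v, ω v = 1) (hQ : (covQ d ω).PosDef)
    (haper : ∀ ξ : Fin d → ℝ, (∀ i, ξ i ∈ Set.Icc (-π) π) → ξ ≠ 0 → ‖ftOmega ω ξ‖ < 1) :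
    Tendsto (fun n : ℕ ↦ (n : ℝ) ^ d * ∫ ξ,
      ((shiftedJacobi (d / 2) 0 n).eval (symbolDefect ω ξ) -
        epdFourierTransform (covQ d ω) ((n : ℝ) • ξ)) ^ 2 ∂torusMeasure (Fin d))
      atTop (𝓝 0) := by
  have hd' : (1 : ℝ) ≤ d := Nat.one_le_cast.2 hd
  obtain ⟨C, hC⟩ := exists_sq_shiftedJacobi_symbolDefect_le hfin hnn hmass hQ haper
    (α := d / 2) (β := 0) (by linarith) (by norm_num)
  have hcube : dualCube (Fin d) ∈ 𝓝 0 := by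
    rw [dualCube, ← Set.pi_univ_Icc]
    exact set_pi_mem_nhds Set.finite_univ fun i _ ↦
      Icc_mem_nhds (neg_lt_zero.2 pi_pos) pi_pos
  have hscaled := tendsto_pow_finrank_mul_setIntegral_sub_sq (μ := volume)
    isCompact_dualCube.measurableSet hcube
    (fun n ↦ (continuous_shiftedJacobi_symbolDefect hfin (d / 2) 0 n).measurable)
    (continuous_epdFourierTransform (covQ d ω)).measurable
    ((integrable_one_add_norm (r := 2 * (d / 2) + 1)
      (by rw [Module.finrank_fin_fun]; linarith)).const_mul C) ?_
    (tendsto_shiftedJacobi_symbolDefect hfin hnn hmass 0)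
  · simpa only [integral_torusMeasure, smul_eq_mul, mul_left_comm, mul_zero,
      Module.finrank_fin_fun] using hscaled.const_mul ((2 * π) ^ Fintype.card (Fin d))⁻¹
  · filter_upwards [eventually_ge_atTop (4 * d)] with n hn
    exact hC n (by have : (4 * d : ℝ) ≤ n := mod_cast hn; linarith)

end ScalingLimit

/-- Local convergence of the Jacobi polynomial iteration to the sinc-filtered fundamental
solution of the Euler–Poisson–Darboux equation. -/
theorem jacobi_iteration_local_convergence
    (d : ℕ) (hd : 1 ≤ d) (ω : (Fin d → ℤ) → ℝ)
    (hfin : (Function.support ω).Finite) (hnn : ∀ v, 0 ≤ ω v)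
    (hmass : ∑' v : Fin d → ℤ, ω v = 1) (hsymm : ∀ v, ω (-v) = ω v)
    (hQ : (covQ d ω).PosDef)
    (haper : ∀ ξ : Fin d → ℝ, (∀ i, ξ i ∈ Set.Icc (-π) π) → ξ ≠ 0 →
      ‖ftOmega ω ξ‖ < 1)
    (x : ℕ → (Fin d → ℤ) → ℝ)
    (hx0 : ∀ v, x 0 v = if v = 0 then 1 else 0)
    (hx1 : ∀ v, x 1 v = aCoef0 d * latticeConv ω (x 0) v + bCoef0 d * x 0 v)
    (hrec : ∀ n, 1 ≤ n → ∀ v,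
      x (n + 1) v = aCoef d n * latticeConv ω (x n) v + bCoef d n * x n v - cCoef d n * x (n - 1) v) :
    Tendsto (fun n : ℕ => (n : ℝ) ^ d * ∑' v : Fin d → ℤ,
        (x n v - ∫ y : Fin d → ℝ,
            (Real.Gamma ((d : ℝ) / 2 + 1) /
                (π ^ ((d : ℝ) / 2) * Real.sqrt (covQ d ω).det * (n : ℝ) ^ d)) *
              (if y ⬝ᵥ ((covQ d ω)⁻¹ *ᵥ y) ≤ (n : ℝ) ^ 2 then 1 else 0) *
              (∏ i, Real.sin (π * ((v i : ℝ) - y i)) / (π * ((v i : ℝ) - y i)))) ^ 2)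
      atTop (𝓝 0) := by
  have : Nonempty (Fin d) := ⟨⟨0, hd⟩⟩
  have hx := jacobi_iteration_eq_cosCoeff hfin hsymm hx0 hx1 hrec
  refine squeeze_zero'
    (.of_forall fun n ↦ mul_nonneg (by positivity) (tsum_nonneg fun v ↦ sq_nonneg _)) ?_
    (tendsto_pow_mul_integral_shiftedJacobi_sub_sq hd hfin hnn hmass hQ haper)
  filter_upwards [eventually_gt_atTop 0] with n hn
  have hp := continuous_shiftedJacobi_symbolDefect hfin (d / 2) 0 n
  have hu : Continuous fun ξ ↦ epdFourierTransform (covQ d ω) ((n : ℝ) • ξ) :=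
    (continuous_epdFourierTransform _).comp (continuous_const_smul _)
  refine mul_le_mul_of_nonneg_left (le_of_eq_of_le (tsum_congr fun v ↦ ?_)
    (tsum_cosCoeff_sq_le (memLp_torusMeasure (hp.sub hu) 2))) (by positivity)
  rw [cosCoeff_sub (integrable_torusMeasure hp) (integrable_torusMeasure hu), hx,
    ← sincFilteredSolution_intCast hQ (Nat.cast_pos.2 hn)]
  simp only [sincFilteredSolution, epdFundamentalSolution, Fintype.card_fin]
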